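/- arXiv:2109.07347 — 3 statements merged into one kernel-verified Lean document; each statement's English description precedes it below -/
import Mathlib

section
/- Let k ≥ 1 and δ ≥ 2 be integers. Let G be a connected simple graph on n vertices with n ≥ (δ² + kδ + 7δ + 6k + 9)(δ² + kδ + 1) and minimum degree δ(G) ≥ δ. If the Q-index satisfies q(G) ≥ 2(n − δ − k − 1), then G is k-path-coverable, unless G belongs to the family 𝓑₁(n,k,δ). -/
open Finset Matrix

/-- The signless Laplacian matrix `Q(G) = D(G) + A(G)` of a graph. -/
noncomputable def signlessLaplacian {V : Type*} [Fintype V] [DecidableEq V]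
    (G : SimpleGraph V) [DecidableRel G.Adj] : Matrix V V ℝ :=
  Matrix.diagonal (fun v => (G.degree v : ℝ)) + G.adjMatrix ℝ

/-- The Q-index (largest eigenvalue of the signless Laplacian). -/
noncomputable def qIndex {V : Type*} [Fintype V] [DecidableEq V]
    (G : SimpleGraph V) [DecidableRel G.Adj] : ℝ :=
  sSup {μ : ℝ | ∃ x : V → ℝ, x ≠ 0 ∧ signlessLaplacian G *ᵥ x = μ • x}

/-- The adjacency spectral radius (largest eigenvalue of the adjacency matrix). -/
noncomputable def adjSpecRad {V : Type*} [Fintype V] [DecidableEq V]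
    (G : SimpleGraph V) [DecidableRel G.Adj] : ℝ :=
  sSup {μ : ℝ | ∃ x : V → ℝ, x ≠ 0 ∧ G.adjMatrix ℝ *ᵥ x = μ • x}

/-- A graph is `k`-path-coverable if its vertex set can be covered by at most `k`
vertex-disjoint paths. -/
def PathCoverable {V : Type*} (G : SimpleGraph V) (k : ℕ) : Prop :=
  ∃ (m : ℕ) (P : Fin m → Σ (u : V) (v : V), G.Walk u v),
    m ≤ k ∧
    (∀ i, (P i).2.2.IsPath) ∧
    (∀ v : V, ∃ i, v ∈ (P i).2.2.support) ∧
    (∀ i j, i ≠ j → ∀ v, v ∈ (P i).2.2.support → v ∉ (P j).2.2.support)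

/-- A graph is traceable if it has a Hamilton path. -/
def Traceable {V : Type*} (G : SimpleGraph V) : Prop :=
  ∃ (u v : V) (p : G.Walk u v), p.IsPath ∧ ∀ w, w ∈ p.support

/-- `B(n,k,δ) = K_δ ∨ (K_{n-2δ-k} ∪ complement K_{δ+k})`: the first `δ` vertices form the
dominating clique `Y`, the next `n-2δ-k` vertices form the clique `Z`, and the
last `δ+k` vertices form the independent set `X`. -/
def Bgraph (n k δ : ℕ) : SimpleGraph (Fin n) where
  Adj i j := i ≠ j ∧ ((i : ℕ) < δ ∨ (j : ℕ) < δ ∨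
      ((i : ℕ) < n - (δ + k) ∧ (j : ℕ) < n - (δ + k)))
  symm := by
    constructor
    rintro i j ⟨hne, h⟩
    exact ⟨hne.symm, by tauto⟩
  loopless := by
    constructor
    rintro i ⟨h, -⟩
    exact h rfl

instance (n k δ : ℕ) : DecidableRel (Bgraph n k δ).Adj := fun i j =>
  inferInstanceAs (Decidable (i ≠ j ∧ ((i : ℕ) < δ ∨ (j : ℕ) < δ ∨
      ((i : ℕ) < n - (δ + k) ∧ (j : ℕ) < n - (δ + k)))))

instance {n : ℕ} (G : SimpleGraph (Fin n)) [DecidableRel G.Adj]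
    (E' : Finset (Sym2 (Fin n))) : DecidableRel (G.deleteEdges ↑E').Adj := fun a b =>
  decidable_of_iff (G.Adj a b ∧ s(a, b) ∉ E') (by simp)

/-- The edge set `E₁` of `B(n,k,δ)`: edges with both endpoints in `Y ∪ Z`. -/
def IsE1Edge (n k δ : ℕ) (e : Sym2 (Fin n)) : Prop :=
  e ∈ (Bgraph n k δ).edgeSet ∧ ∀ v ∈ e, (v : ℕ) < n - (δ + k)

/-- The family `𝓑₁(n,k,δ)`, up to isomorphism. -/
def InB1 (n k δ : ℕ) (G : SimpleGraph (Fin n)) : Prop :=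
  ∃ E' : Finset (Sym2 (Fin n)),
    (∀ e ∈ E', IsE1Edge n k δ e) ∧ E'.card ≤ δ * (δ + k) / 4 ∧
    Nonempty (G ≃g (Bgraph n k δ).deleteEdges ↑E')

/-- The family `𝓑₂(n,k,δ)`, up to isomorphism. -/
def InB2 (n k δ : ℕ) (G : SimpleGraph (Fin n)) : Prop :=
  ∃ E' : Finset (Sym2 (Fin n)),
    (∀ e ∈ E', IsE1Edge n k δ e) ∧ E'.card = δ * (δ + k) / 4 + 1 ∧
    Nonempty (G ≃g (Bgraph n k δ).deleteEdges ↑E')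

/-!
Suppose `G` has no cover by `k` paths, and let `H` be its Bondy–Chvátal closure: joining two
nonadjacent vertices whose degrees add up to at least `n - k` creates no such cover. The Feng–Yu
bound turns the hypothesis on `q(G)` into a lower bound on the number of edges. In `H` this leaves
room for only one set `X` of low-degree vertices: it has `δ + k` elements, all of degree `δ`, and
its complement is a clique. Closedness forces the vertices of `X` to have the same neighbours `Y`
outside `X`, and an Ore-type argument inside `X` gives `|Y| = δ`, so they have no others. The
minimum degree condition makes `G` agree with `H` at `X`, so `G` is `B(n,k,δ)` with some edges
outside `X` removed.

If more than `⌊δ(δ+k)/4⌋` edges are missing, compare the quadratic form of `Q(G)` at a vector `x`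
with `2(n - δ - k - 1)‖x‖²`. A vector equal to `a` on the complement of `X` and to zero on `X` gains
at most `δ(δ+k)a²` from the edges between `X` and `Y` and loses `4a²` for every missing edge; since
`n` is large, deviations from such a vector only lower the Rayleigh quotient.
-/

section Breaks

variable {α β : Type*} {r s : α → α → Prop}

/-- The cost of passing from `a` to `b`: zero if `r a b` holds, and one otherwise. -/
noncomputable def gap (r : α → α → Prop) (a b : α) : ℕ :=
  open Classical in if r a b then 0 else 1

/-- The number of consecutive pairs of a list that fail `r`. A list of vertices with `m` breaks
for the adjacency relation of a graph is a concatenation of `m + 1` walks. -/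
noncomputable def breaks (r : α → α → Prop) : List α → ℕ
  | [] => 0
  | [_] => 0
  | a :: b :: l => gap r a b + breaks r (b :: l)

lemma gap_of_rel {a b : α} (h : r a b) : gap r a b = 0 := if_pos h

lemma gap_of_not_rel {a b : α} (h : ¬ r a b) : gap r a b = 1 := if_neg h

lemma gap_le_one (r : α → α → Prop) (a b : α) : gap r a b ≤ 1 := by
  unfold gap; split_ifs <;> simp

lemma gap_add_ite [DecidableRel r] (a b : α) : gap r a b + (if r a b then 1 else 0) = 1 := by
  unfold gap; split_ifs <;> rfl

lemma gap_comm (hr : Std.Symm r) (a b : α) : gap r a b = gap r b a := by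
  unfold gap; grind [hr.symm a b, hr.symm b a]

@[simp] lemma breaks_nil : breaks r [] = 0 := rfl

@[simp] lemma breaks_singleton (a : α) : breaks r [a] = 0 := rfl

@[simp] lemma breaks_cons_cons (a b : α) (l : List α) :
    breaks r (a :: b :: l) = gap r a b + breaks r (b :: l) := rfl

lemma breaks_append {l m : List α} (hl : l ≠ []) (hm : m ≠ []) :
    breaks r (l ++ m) = breaks r l + gap r (l.getLast hl) (m.head hm) + breaks r m := by
  induction l with
  | nil => exact absurd rfl hl
  | cons a l ih =>
    cases l with
    | nil =>
      obtain ⟨b, m, rfl⟩ := List.exists_cons_of_ne_nil hm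
      simp
    | cons b l =>
      have := ih (List.cons_ne_nil b l)
      simp only [List.cons_append, breaks_cons_cons, List.getLast_cons_cons] at this ⊢
      omega

lemma breaks_append_le (l m : List α) : breaks r (l ++ m) ≤ breaks r l + 1 + breaks r m := by
  rcases eq_or_ne l [] with rfl | hl
  · simp
  rcases eq_or_ne m [] with rfl | hm
  · simp
  grind [breaks_append hl hm (r := r), gap_le_one]

lemma breaks_reverse (hr : Std.Symm r) (l : List α) : breaks r l.reverse = breaks r l := by
  induction l with
  | nil => rfl
  | cons a l ih =>
    cases l with
    | nil => rfl
    | cons b l =>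
      rw [List.reverse_cons, breaks_append (by simp) (by simp), ih, breaks_cons_cons]
      simp [gap_comm hr, add_comm]

lemma breaks_map (f : α → β) (t : β → β → Prop) (l : List α) :
    breaks t (l.map f) = breaks (fun a b => t (f a) (f b)) l := by
  induction l with
  | nil => rfl
  | cons a l ih => cases l <;> simp_all [gap]

lemma exists_append_of_breaks_lt {l : List α} (h : breaks s l < breaks r l) :
    ∃ (p q : List α) (hp : p ≠ []) (hq : q ≠ []), l = p ++ q ∧
      s (p.getLast hp) (q.head hq) ∧ ¬ r (p.getLast hp) (q.head hq) := by
  induction l with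
  | nil => simp at h
  | cons a l ih =>
    cases l with
    | nil => simp at h
    | cons b l =>
      by_cases hlt : breaks s (b :: l) < breaks r (b :: l)
      · obtain ⟨p, q, hp, hq, hpq, hs⟩ := ih hlt
        exact ⟨a :: p, q, by simp, hq, by simp [hpq], by rwa [List.getLast_cons hp]⟩
      · have hgap : gap s a b < gap r a b := by simp only [breaks_cons_cons] at h; omega
        have hab : s a b ∧ ¬ r a b := by unfold gap at hgap; grind
        exact ⟨[a], b :: l, by simp, by simp, rfl, hab⟩

lemma exists_append_of_breaks_pos {l : List α} (h : 0 < breaks r l) :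
    ∃ (p q : List α) (hp : p ≠ []) (hq : q ≠ []), l = p ++ q ∧
      ¬ r (p.getLast hp) (q.head hq) := by
  have htop : ∀ m : List α, breaks (fun _ _ => True) m = 0 := fun m => by
    induction m with
    | nil => rfl
    | cons a m ih => cases m <;> simp_all [gap]
  obtain ⟨p, q, hp, hq, hl, -, hr⟩ :=
    exists_append_of_breaks_lt (r := r) (s := fun _ _ => True) (htop l ▸ h)
  exact ⟨p, q, hp, hq, hl, hr⟩

lemma breaks_anti (h : ∀ a b, r a b → s a b) (l : List α) : breaks s l ≤ breaks r l := by
  by_contra! hlt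
  obtain ⟨p, q, hp, hq, -, hr, hs⟩ := exists_append_of_breaks_lt hlt
  exact hs (h _ _ hr)

lemma breaks_eq_zero_of_pairwise {l : List α} (h : l.Pairwise r) : breaks r l = 0 := by
  by_contra hne
  obtain ⟨p, q, hp, hq, rfl, hr⟩ := exists_append_of_breaks_pos (Nat.pos_of_ne_zero hne)
  exact hr ((List.pairwise_append.1 h).2.2 _ (List.getLast_mem hp) _ (List.head_mem hq))

lemma exists_perm_breaks_lt {l : List α} (hl : l ≠ []) {k : ℕ} (hk : 0 < k)
    (h : breaks r l + gap r (l.getLast hl) (l.head hl) ≤ k) :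
    ∃ l' : List α, l'.Perm l ∧ breaks r l' < k := by
  rcases Nat.eq_zero_or_pos (breaks r l) with h0 | hpos
  · exact ⟨l, .refl l, h0 ▸ hk⟩
  obtain ⟨p, q, hp, hq, rfl, hr⟩ := exists_append_of_breaks_pos hpos
  refine ⟨q ++ p, List.perm_append_comm, ?_⟩
  rw [breaks_append hp hq, gap_of_not_rel hr, List.getLast_append_of_ne_nil _ hq,
    List.head_append_of_ne_nil hp] at h
  rw [breaks_append hq hp]
  omega

lemma countP_add_countP_tail_add_breaks_lt {p q : α → Prop} [DecidablePred p] [DecidablePred q]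
    {l : List α} (hl : l ≠ []) (hlast : ¬ p (l.getLast hl))
    (h : l.IsChain fun a b =>
      (if p a then 1 else 0) + (if q b then 1 else 0) + gap r a b ≤ 1) :
    l.countP p + l.tail.countP q + breaks r l < l.length := by
  induction l with
  | nil => exact absurd rfl hl
  | cons a l ih =>
    cases l with
    | nil => simp_all
    | cons b l =>
      rw [List.isChain_cons_cons] at h
      have := ih (by simp) (by simpa using hlast) h.2
      simp only [List.tail_cons, List.countP_cons, breaks_cons_cons, List.length_cons,
        decide_eq_true_eq] at this h ⊢
      omega

lemma isChain_of_forall_append {l : List α} (h : ∀ (p q : List α) (hp : p ≠ []) (hq : q ≠ []),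
    l = p ++ q → r (p.getLast hp) (q.head hq)) : l.IsChain r := by
  rw [List.isChain_iff_forall_rel_of_append_cons_cons]
  intro a b p q hl
  simpa using h (p ++ [a]) (b :: q) (by simp) (by simp) (by simp [hl])

lemma exists_flatten_eq (r : α → α → Prop) {l : List α} (hl : l ≠ []) :
    ∃ L : List (List α), L.flatten = l ∧ (∀ m ∈ L, m ≠ [] ∧ m.IsChain r) ∧
      L.length ≤ breaks r l + 1 := by
  induction hb : breaks r l using Nat.strong_induction_on generalizing l with
  | _ b ih =>
    rcases Nat.eq_zero_or_pos b with h0 | hpos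
    · refine ⟨[l], by simp, fun m hm => ?_, by simp⟩
      obtain rfl := List.mem_singleton.1 hm
      refine ⟨hl, isChain_of_forall_append fun p q hp hq hpq => ?_⟩
      by_contra hr
      rw [hpq, breaks_append hp hq, gap_of_not_rel hr] at hb
      omega
    · obtain ⟨p, q, hp, hq, hpq, hr⟩ := exists_append_of_breaks_pos (hb ▸ hpos)
      rw [hpq, breaks_append hp hq, gap_of_not_rel hr] at hb
      obtain ⟨L, hLp, hL, hLlen⟩ := ih _ (by omega) hp rfl
      obtain ⟨M, hMq, hM, hMlen⟩ := ih _ (by omega) hq rfl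
      refine ⟨L ++ M, by simp [hLp, hMq, hpq], fun m hm => ?_, by rw [List.length_append]; omega⟩
      exact (List.mem_append.1 hm).elim (hL m) (hM m)

lemma exists_perm_cons_breaks_le (hr : Std.Symm r) {y : α} {l : List α} (h : ∀ a ∈ l, r y a) :
    ∃ l' : List α, l'.Perm (y :: l) ∧ breaks r l' ≤ breaks r l - 1 := by
  rcases Nat.eq_zero_or_pos (breaks r l) with h0 | hpos
  · refine ⟨y :: l, .refl _, ?_⟩
    cases l <;> simp_all [gap_of_rel]
  obtain ⟨p, q, hp, hq, rfl, hpq⟩ := exists_append_of_breaks_pos hpos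
  refine ⟨p ++ y :: q, List.perm_middle, ?_⟩
  have hy₁ : r (p.getLast hp) y := hr.symm _ _ (h _ (by simp))
  have hy₂ : r y (q.head hq) := h _ (by simp)
  have hyq : breaks r (y :: q) = breaks r q := by
    cases q <;> simp_all [gap_of_rel]
  rw [breaks_append hp (by simp), breaks_append hp hq, List.head_cons, gap_of_rel hy₁,
    gap_of_not_rel hpq, hyq]
  omega

lemma exists_perm_append_breaks_le (hr : Std.Symm r) {ys l : List α} (hnd : (ys ++ l).Nodup)
    (h : ∀ y ∈ ys, ∀ a, a ≠ y → r y a) :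
    ∃ l' : List α, l'.Perm (ys ++ l) ∧ breaks r l' ≤ breaks r l - ys.length := by
  induction ys with
  | nil => exact ⟨l, .refl _, by simp⟩
  | cons y ys ih =>
    rw [List.cons_append, List.nodup_cons] at hnd
    obtain ⟨l₁, hperm₁, hl₁⟩ := ih hnd.2 fun z hz => h z (List.mem_cons_of_mem y hz)
    have hy : ∀ a ∈ l₁, r y a := fun a ha =>
      h y List.mem_cons_self a fun hay => hnd.1 (hay ▸ hperm₁.mem_iff.1 ha)
    obtain ⟨l₂, hperm₂, hl₂⟩ := exists_perm_cons_breaks_le hr hy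
    exact ⟨l₂, hperm₂.trans (hperm₁.cons y), by rw [List.length_cons]; omega⟩

end Breaks

section PathOrderings

variable {V : Type*} {G H : SimpleGraph V} {k : ℕ}

/-- A list containing every element of `V` exactly once. -/
def IsOrdering (l : List V) : Prop := l.Nodup ∧ ∀ v, v ∈ l

/-- `G` has an ordering of its vertices in which fewer than `k` consecutive pairs are nonadjacent:
the form of `k`-path-coverability that the exchange arguments work with. -/
def PathOrderable (G : SimpleGraph V) (k : ℕ) : Prop :=
  ∃ l : List V, IsOrdering l ∧ breaks G.Adj l < k

lemma IsOrdering.perm {l l' : List V} (hl : IsOrdering l) (h : l'.Perm l) : IsOrdering l' :=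
  ⟨h.nodup_iff.2 hl.1, fun v => h.mem_iff.2 (hl.2 v)⟩

lemma IsOrdering.ne_nil [Nonempty V] {l : List V} (hl : IsOrdering l) : l ≠ [] :=
  List.ne_nil_of_mem (hl.2 (Classical.arbitrary V))

lemma IsOrdering.countP_eq_card [Fintype V] {l : List V} (hl : IsOrdering l) (p : V → Prop)
    [DecidablePred p] : l.countP p = #{v | p v} := by
  classical
  rw [List.countP_eq_length_filter, ← List.toFinset_card_of_nodup (hl.1.filter _)]
  congr 1
  ext v
  simp [hl.2]

lemma IsOrdering.length_eq_card [Fintype V] {l : List V} (hl : IsOrdering l) :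
    l.length = Fintype.card V := by
  simpa using hl.countP_eq_card fun _ => True

lemma IsOrdering.countP_adj [Fintype V] [DecidableRel G.Adj] {l : List V} (hl : IsOrdering l)
    (v : V) : l.countP (G.Adj v) = G.degree v := by
  rw [hl.countP_eq_card, ← G.neighborFinset_eq_filter, G.card_neighborFinset_eq_degree]

lemma exists_isOrdering (V : Type*) [Finite V] : ∃ l : List V, IsOrdering l :=
  have := Fintype.ofFinite V
  ⟨univ.toList, nodup_toList _, by simp⟩

lemma PathOrderable.pathCoverable [Nonempty V] (h : PathOrderable G k) : PathCoverable G k := by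
  obtain ⟨l, hl, hlk⟩ := h
  obtain ⟨L, hflat, hL, hlen⟩ := exists_flatten_eq G.Adj hl.ne_nil
  have hnd := List.nodup_flatten.1 (hflat ▸ hl.1)
  have hget (i : Fin L.length) := hL _ (L.get_mem i)
  refine ⟨L.length, fun i => ⟨_, _, .ofSupport (L.get i) (hget i).1 (hget i).2⟩, by omega, ?_⟩
  simp only [SimpleGraph.Walk.isPath_def, SimpleGraph.Walk.support_ofSupport]
  refine ⟨fun i => hnd.1 _ (L.get_mem i), fun v => ?_, fun i j hij v hi hj => ?_⟩
  · obtain ⟨m, hm, hv⟩ := List.mem_flatten.1 (hflat ▸ hl.2 v)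
    obtain ⟨i, rfl⟩ := List.get_of_mem hm
    exact ⟨i, hv⟩
  · have hdisj := List.pairwise_iff_get.1 hnd.2
    rcases lt_or_gt_of_ne hij with hij | hij
    · exact hdisj i j hij hi hj
    · exact hdisj j i hij hj hi

lemma pathOrderable_top [Finite V] (hk : 0 < k) : PathOrderable (⊤ : SimpleGraph V) k := by
  obtain ⟨l, hl⟩ := exists_isOrdering V
  exact ⟨l, hl, (breaks_eq_zero_of_pairwise hl.1).trans_lt hk⟩

lemma PathOrderable.mono (hGH : G ≤ H) (h : PathOrderable G k) : PathOrderable H k := by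
  obtain ⟨l, hl, hlk⟩ := h
  exact ⟨l, hl, (breaks_anti (fun _ _ hab => hGH hab) l).trans_lt hlk⟩

lemma lt_cyclic_breaks (hG : ¬ PathOrderable G k) (hk : 0 < k) {l : List V} (hl : IsOrdering l)
    (hne : l ≠ []) : k < breaks G.Adj l + gap G.Adj (l.getLast hne) (l.head hne) := by
  by_contra! hle
  obtain ⟨l', hperm, hl'⟩ := exists_perm_breaks_lt hne hk hle
  exact hG ⟨l', hl.perm hperm, hl'⟩

lemma degree_getLast_add_degree_head_lt [Fintype V] [DecidableRel G.Adj]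
    (hG : ¬ PathOrderable G k) (hk : 0 < k) {l : List V} (hl : IsOrdering l) (hne : l ≠ [])
    (hlk : breaks G.Adj l ≤ k) :
    G.degree (l.getLast hne) + G.degree (l.head hne) + k < Fintype.card V := by
  set v := l.getLast hne with hv
  set u := l.head hne with hu
  have hcyc : k < breaks G.Adj l + gap G.Adj v u := lt_cyclic_breaks hG hk hl hne
  have hgap := gap_le_one G.Adj v u
  -- Reversing the final segment `q` of `l = p ++ q` must not lower the number of cyclic breaks, so
  -- `G.Adj v a` and `G.Adj u b` cannot both hold for consecutive `a`, `b`, and neither can hold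
  -- if `a`, `b` is a break.
  have hchain : l.IsChain fun a b =>
      (if G.Adj v a then 1 else 0) + (if G.Adj u b then 1 else 0) + gap G.Adj a b ≤ 1 := by
    refine isChain_of_forall_append fun p q hp hq hpq => ?_
    have hqr : q.reverse ≠ [] := by simpa using hq
    have hperm : (p ++ q.reverse).Perm l := hpq ▸ (List.reverse_perm q).append_left p
    have hcyc' := lt_cyclic_breaks hG hk (hl.perm hperm) (by simp [hp])
    have hlast : v = q.getLast hq := by simp [hv, hpq, List.getLast_append_of_ne_nil, hq]
    have hhead : u = p.head hp := by simp [hu, hpq, List.head_append_of_ne_nil, hp]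
    have hbreaks := breaks_append hp hq (r := G.Adj)
    rw [breaks_append hp hqr, breaks_reverse G.symm, List.head_append_of_ne_nil hp,
      List.getLast_append_of_ne_nil _ hqr, List.head_reverse, List.getLast_reverse, ← hlast,
      ← hhead] at hcyc'
    rw [← hpq] at hbreaks
    have h₁ := gap_add_ite (r := G.Adj) v (p.getLast hp)
    have h₂ := gap_add_ite (r := G.Adj) u (q.head hq)
    rw [gap_comm G.symm] at h₁ h₂
    omega
  have hcount := countP_add_countP_tail_add_breaks_lt hne (by simp [← hv]) hchain
  have htail : l.countP (G.Adj u) = l.tail.countP (G.Adj u) := by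
    rw [← List.cons_head_tail hne, List.countP_cons, ← hu]
    simp
  rw [← htail, hl.countP_adj, hl.countP_adj, hl.length_eq_card] at hcount
  omega

lemma breaks_le_breaks_sup_edge {u v : V} {l : List V} (h : u ∈ l → v ∉ l) :
    breaks G.Adj l ≤ breaks (G ⊔ SimpleGraph.edge u v).Adj l := by
  by_contra! hlt
  obtain ⟨p, q, hp, hq, rfl, hedge, hG⟩ := exists_append_of_breaks_lt hlt
  have hpl : p.getLast hp ∈ p ++ q := by simp
  have hql : q.head hq ∈ p ++ q := by simp
  rw [SimpleGraph.sup_adj, SimpleGraph.edge_adj] at hedge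
  grind

lemma PathOrderable.of_sup_edge [Fintype V] [DecidableRel G.Adj] (hk : 0 < k) {u v : V}
    (hdeg : Fintype.card V ≤ G.degree u + G.degree v + k)
    (h : PathOrderable (G ⊔ SimpleGraph.edge u v) k) : PathOrderable G k := by
  by_contra hG
  obtain ⟨l, hl, hlk⟩ := h
  have hlt : breaks (G ⊔ SimpleGraph.edge u v).Adj l < breaks G.Adj l :=
    hlk.trans_le (not_lt.1 fun hlt => hG ⟨l, hl, hlt⟩)
  obtain ⟨p, q, hp, hq, rfl, hedge, hpq⟩ := exists_append_of_breaks_lt hlt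
  have huv : u = p.getLast hp ∧ v = q.head hq ∨ v = p.getLast hp ∧ u = q.head hq := by
    rw [SimpleGraph.sup_adj, SimpleGraph.edge_adj] at hedge
    grind
  have hdisj : ∀ a ∈ p, a ∉ q := fun a hap haq => List.disjoint_of_nodup_append hl.1 hap haq
  have hp' := List.getLast_mem hp
  have hq' := List.head_mem hq
  have hbp : breaks G.Adj p ≤ breaks (G ⊔ SimpleGraph.edge u v).Adj p :=
    breaks_le_breaks_sup_edge (by grind)
  have hbq : breaks G.Adj q ≤ breaks (G ⊔ SimpleGraph.edge u v).Adj q :=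
    breaks_le_breaks_sup_edge (by grind)
  rw [breaks_append hp hq, gap_of_rel hedge] at hlk
  have happend := breaks_append_le (r := G.Adj) q p
  have := degree_getLast_add_degree_head_lt hG hk (hl.perm List.perm_append_comm)
    (l := q ++ p) (by simp [hp]) (by omega)
  rw [List.getLast_append_of_ne_nil _ hp, List.head_append_of_ne_nil hq] at this
  rcases huv with ⟨rfl, rfl⟩ | ⟨rfl, rfl⟩ <;> omega

/-- `H` equals its Bondy–Chvátal closure for path covers with `k` paths: the degrees of
nonadjacent vertices add up to less than `|V| - k`. -/
def DegreeSumClosed [Fintype V] (H : SimpleGraph V) [DecidableRel H.Adj] (k : ℕ) : Prop :=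
  ∀ u v, u ≠ v → ¬ H.Adj u v → H.degree u + H.degree v + k < Fintype.card V

lemma exists_le_degreeSumClosed [Fintype V] (hG : ¬ PathOrderable G k) (hk : 0 < k) :
    ∃ (H : SimpleGraph V) (_ : DecidableRel H.Adj),
      G ≤ H ∧ ¬ PathOrderable H k ∧ DegreeSumClosed H k := by
  classical
  obtain ⟨H, hGH, hmax⟩ :=
    (Set.toFinite {H : SimpleGraph V | ¬ PathOrderable H k}).exists_le_maximal hG
  refine ⟨H, inferInstance, hGH, hmax.prop, fun u v huv hadj => ?_⟩
  by_contra! hdeg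
  have hle : H ⊔ SimpleGraph.edge u v ≤ H :=
    hmax.le_of_ge (fun h => hmax.prop (h.of_sup_edge hk hdeg)) le_sup_left
  exact hadj (hle (by simp [SimpleGraph.edge_adj, huv]))

lemma exists_degree_add_degree_lt [Fintype V] [DecidableRel G.Adj] (hG : ¬ PathOrderable G k)
    (hk : 0 < k) : ∃ u v, u ≠ v ∧ ¬ G.Adj u v ∧ G.degree u + G.degree v + k < Fintype.card V := by
  obtain ⟨H, _, hGH, hH, hclosed⟩ := exists_le_degreeSumClosed hG hk
  have hne : H ≠ ⊤ := fun h => hH (h ▸ pathOrderable_top hk)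
  obtain ⟨u, v, huv, hadj⟩ := SimpleGraph.ne_top_iff_exists_not_adj.1 hne
  refine ⟨u, v, huv, fun h => hadj (hGH h), ?_⟩
  have := hclosed u v huv hadj
  have := SimpleGraph.degree_le_of_le hGH (v := u)
  have := SimpleGraph.degree_le_of_le hGH (v := v)
  omega

end PathOrderings

section DegreeSum

variable {V : Type*} {H : SimpleGraph V} [DecidableRel H.Adj] {k δ : ℕ}

lemma card_filter_adj_lt {S : Finset V} {w : V} (hw : w ∈ S) : #{a ∈ S | H.Adj w a} < #S :=
  card_lt_card <| filter_ssubset.2 ⟨w, hw, H.irrefl⟩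

variable [Fintype V]

lemma degree_eq_card_filter_add [DecidableEq V] (S : Finset V) (v : V) :
    H.degree v = #{a ∈ S | H.Adj v a} + #{a ∈ Sᶜ | H.Adj v a} := by
  rw [← card_union_of_disjoint (disjoint_filter_filter disjoint_compl_right), ← filter_union,
    union_compl, ← H.neighborFinset_eq_filter, H.card_neighborFinset_eq_degree]

lemma sum_degree_le [DecidableEq V] (S : Finset V) :
    ∑ v, H.degree v ≤ 2 * ∑ v ∈ S, H.degree v + ∑ w ∈ Sᶜ, #{a ∈ Sᶜ | H.Adj w a} := by
  have hcross : ∑ w ∈ Sᶜ, #{a ∈ S | H.Adj w a} = ∑ a ∈ S, #{w ∈ Sᶜ | H.Adj a w} := by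
    simpa only [bipartiteAbove, bipartiteBelow, H.adj_comm] using
      sum_card_bipartiteAbove_eq_sum_card_bipartiteBelow (s := Sᶜ) (t := S) H.Adj
  calc ∑ v, H.degree v
      = ∑ v ∈ S, H.degree v + ∑ a ∈ S, #{w ∈ Sᶜ | H.Adj a w}
        + ∑ w ∈ Sᶜ, #{a ∈ Sᶜ | H.Adj w a} := by
        rw [← sum_add_sum_compl S, add_assoc, ← hcross, ← sum_add_distrib]
        simp only [← degree_eq_card_filter_add S]
    _ ≤ ∑ v ∈ S, H.degree v + ∑ v ∈ S, H.degree v + ∑ w ∈ Sᶜ, #{a ∈ Sᶜ | H.Adj w a} := by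
        gcongr with v
        exact Nat.le.intro ((add_comm _ _).trans (degree_eq_card_filter_add S v).symm)
    _ = _ := by rw [two_mul]

lemma DegreeSumClosed.exists_forall_degree_le (hH : DegreeSumClosed H k) (htop : H ≠ ⊤) :
    ∃ (i : ℕ) (X : Finset V), #X = i + k ∧ (∀ x ∈ X, H.degree x ≤ i) ∧
      2 * i + k < Fintype.card V := by
  classical
  let S : Finset (V × V) := {p | Hᶜ.Adj p.1 p.2}
  have hS : S.Nonempty := by
    obtain ⟨u, v, huv, hadj⟩ := SimpleGraph.ne_top_iff_exists_not_adj.1 htop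
    exact ⟨(u, v), by simp [S, SimpleGraph.compl_adj, huv, hadj]⟩
  obtain ⟨⟨u, v⟩, huv, hmax⟩ := S.exists_max_image (fun p => H.degree p.1 + H.degree p.2) hS
  wlog hle : H.degree u ≤ H.degree v generalizing u v
  · refine this v u ?_ ?_ (le_of_not_ge hle)
    · simp only [S, mem_filter, mem_univ, true_and] at huv ⊢
      exact huv.symm
    · simpa only [add_comm (H.degree v)] using hmax
  simp only [S, mem_filter, mem_univ, true_and, Prod.forall] at huv hmax
  have hlt := hH u v huv.1 huv.2
  have hcard : H.degree u + k ≤ #(Hᶜ.neighborFinset v) := by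
    rw [SimpleGraph.card_neighborFinset_eq_degree, SimpleGraph.degree_compl]
    omega
  obtain ⟨X, hX, hXcard⟩ := exists_subset_card_eq hcard
  refine ⟨H.degree u, X, hXcard, fun x hx => ?_, by omega⟩
  have := hmax x v ((Hᶜ.mem_neighborFinset v x).1 (hX hx)).symm
  omega

lemma le_of_degree_sum_bound {N k i d : ℤ} (hk : 0 ≤ k) (hd : 0 ≤ d)
    (hN : 6 * (d + k) ^ 2 + 12 * (d + k) < N) (hi : 2 * i + k + 1 ≤ N)
    (h : (N - 1) * (N - 2 * (d + k)) ≤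
      2 * ((i + k) * i) + (N - (i + k)) * (N - (i + k) - 1)) : i ≤ d := by
  by_contra! hlt
  obtain ⟨t, rfl⟩ : ∃ t, i = d + t := ⟨i - d, by ring⟩
  have ht : 1 ≤ t := by omega
  have hquad : 2 * N * t ≤ 3 * (t + (d + k)) ^ 2 := by
    nlinarith [mul_nonneg (show 0 ≤ t + (d + k) by omega) hk]
  have hlin : t * (2 * t) ≤ t * N := by gcongr; omega
  have hle : N ≤ 12 * (d + k) + 6 * (d + k) ^ 2 := by
    refine le_of_mul_le_mul_left ?_ (show 0 < t by omega)
    nlinarith [mul_nonneg (sq_nonneg (d + k)) (show 0 ≤ t - 1 by omega)]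
  omega

lemma degree_sum_bound_false {N k d : ℤ} (hk : 0 ≤ k) (hd : 1 ≤ d)
    (hN : 6 * (d + k) ^ 2 + 12 * (d + k) < N)
    (h : (N - 1) * (N - 2 * (d + k)) ≤
      2 * ((d + k) * d) + ((N - (d + k) - 2) * (N - (d + k) - 1) + (N - k - 1))) : False := by
  nlinarith

lemma DegreeSumClosed.exists_forall_degree_eq (hH : DegreeSumClosed H k) (htop : H ≠ ⊤)
    (hk : 0 < k) (hmin : ∀ v, δ ≤ H.degree v)
    (hcard : 6 * (δ + k) ^ 2 + 12 * (δ + k) < Fintype.card V)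
    (hsum : ((Fintype.card V : ℤ) - 1) * (Fintype.card V - 2 * (δ + k)) ≤ ∑ v, (H.degree v : ℤ)) :
    ∃ X : Finset V, #X = δ + k ∧ ∀ x ∈ X, H.degree x = δ := by
  classical
  obtain ⟨i, X, hX, hdeg, hi⟩ := hH.exists_forall_degree_le htop
  obtain ⟨x, hx⟩ : X.Nonempty := card_pos.1 (by omega)
  have hXc : #Xᶜ = Fintype.card V - (i + k) := by rw [card_compl, hX]
  have hbound : ∑ v, H.degree v ≤ 2 * ((i + k) * i) + #Xᶜ * (#Xᶜ - 1) := by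
    refine (sum_degree_le X).trans ?_
    rw [← hX, ← smul_eq_mul #X, ← smul_eq_mul #Xᶜ]
    gcongr
    · exact sum_le_card_nsmul _ _ _ hdeg
    · exact sum_le_card_nsmul _ _ _ fun w hw => Nat.le_sub_one_of_lt (card_filter_adj_lt hw)
  have hiδ : (i : ℤ) ≤ δ := by
    refine le_of_degree_sum_bound (k := k) (N := Fintype.card V) (by omega) (by omega)
      (by exact_mod_cast hcard) (by omega) (hsum.trans ?_)
    rw [hXc] at hbound
    zify [show 1 ≤ Fintype.card V - (i + k) by omega, show i + k ≤ Fintype.card V by omega]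
      at hbound
    exact hbound
  obtain rfl : i = δ := by have := hmin x; have := hdeg x hx; omega
  exact ⟨X, hX, fun x hx => (hdeg x hx).antisymm (hmin x)⟩

lemma DegreeSumClosed.isClique_compl (hH : DegreeSumClosed H k) (hδ : 0 < δ) {X : Finset V}
    (hX : #X = δ + k) (hdeg : ∀ x ∈ X, H.degree x = δ)
    (hcard : 6 * (δ + k) ^ 2 + 12 * (δ + k) < Fintype.card V)
    (hsum : ((Fintype.card V : ℤ) - 1) * (Fintype.card V - 2 * (δ + k)) ≤ ∑ v, (H.degree v : ℤ)) :
    H.IsClique (X : Set V)ᶜ := by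
  classical
  intro u hu v hv huv
  by_contra hadj
  have hu : u ∈ Xᶜ := by simpa using hu
  have hv : v ∈ Xᶜ.erase u := by simpa [huv.symm] using hv
  have hXc : #Xᶜ = Fintype.card V - (δ + k) := by rw [card_compl, hX]
  have hlt := hH u v huv hadj
  have hinner (w : V) := degree_eq_card_filter_add (H := H) X w
  have hrest : ∑ w ∈ (Xᶜ.erase u).erase v, #{a ∈ Xᶜ | H.Adj w a} ≤ (#Xᶜ - 2) * (#Xᶜ - 1) := by
    have hcard' : #((Xᶜ.erase u).erase v) = #Xᶜ - 2 := by
      rw [card_erase_of_mem hv, card_erase_of_mem hu]; rfl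
    rw [← hcard', ← smul_eq_mul]
    refine sum_le_card_nsmul _ _ _ fun w hw => Nat.le_sub_one_of_lt (card_filter_adj_lt ?_)
    exact mem_of_mem_erase (mem_of_mem_erase hw)
  have hXsum : ∑ x ∈ X, H.degree x = (δ + k) * δ := by
    rw [sum_congr rfl hdeg, sum_const, hX, smul_eq_mul]
  have hbound := sum_degree_le (H := H) X
  rw [hXsum, ← add_sum_erase _ _ hu, ← add_sum_erase _ _ hv] at hbound
  refine degree_sum_bound_false (N := Fintype.card V) (k := k) (d := δ) (by omega) (by omega)
    (by exact_mod_cast hcard) (hsum.trans ?_)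
  have hpos : 2 + (δ + k) ≤ Fintype.card V := by nlinarith
  zify [show 2 ≤ #Xᶜ by omega, show 1 ≤ #Xᶜ by omega] at hrest hbound
  zify [show δ + k ≤ Fintype.card V by omega] at hXc
  have := hinner u
  have := hinner v
  rw [hXc] at hrest
  have : (H.degree u : ℤ) + H.degree v + k + 1 ≤ Fintype.card V := by omega
  linarith

end DegreeSum

section CliqueJoin

variable {V : Type*} {G H : SimpleGraph V} {X Y : Finset V} {k m δ : ℕ}

/-- `H` is the join `K_Y ∨ (K_Z ∪ H[X])`, where `Z` is the complement of `X ∪ Y`. -/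
structure IsCliqueJoin (H : SimpleGraph V) (X Y : Finset V) : Prop where
  disjoint : Disjoint X Y
  isClique : H.IsClique (X : Set V)ᶜ
  adj_iff : ∀ x ∈ X, ∀ w ∉ X, H.Adj x w ↔ w ∈ Y

lemma IsCliqueJoin.adj_of_mem (h : IsCliqueJoin H X Y) {y a : V} (hy : y ∈ Y) (hay : a ≠ y) :
    H.Adj y a := by
  have hyX : y ∉ X := disjoint_right.1 h.disjoint hy
  by_cases haX : a ∈ X
  · exact ((h.adj_iff a haX y hyX).2 hy).symm
  · exact h.isClique (by simpa using hyX) (by simpa using haX) hay.symm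

/-- Order `Z` and then `X` as in the given ordering; each vertex of `Y` then repairs a break. -/
lemma IsCliqueJoin.pathOrderable [Finite V] (h : IsCliqueJoin H X Y)
    (hX : PathOrderable (H.induce (X : Set V)) m) (hm : m < #Y + k) (hk : 0 < k) :
    PathOrderable H k := by
  classical
  have := Fintype.ofFinite V
  obtain ⟨l, hl, hlm⟩ := hX
  let Z : Finset V := (X ∪ Y)ᶜ
  have hZ : breaks H.Adj Z.toList = 0 := by
    refine breaks_eq_zero_of_pairwise (Z.nodup_toList.pairwise_of_forall_ne ?_)
    intro a ha b hb
    simp only [Z, mem_toList, mem_compl, mem_union, not_or] at ha hb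
    exact h.isClique (by simpa using ha.1) (by simpa using hb.1)
  have hmem (a : V) : a ∈ l.map Subtype.val ↔ a ∈ X := by simp [hl.2]
  have hnd : (Y.toList ++ (Z.toList ++ l.map Subtype.val)).Nodup := by
    have hlX := hl.1.map Subtype.val_injective
    have hXY (a : V) : a ∈ X → a ∉ Y := fun ha => disjoint_left.1 h.disjoint ha
    simp only [List.nodup_append', List.disjoint_left, List.mem_append, hmem, mem_toList,
      nodup_toList, hlX, Z, mem_compl, mem_union]
    tauto
  obtain ⟨l', hperm, hl'⟩ := exists_perm_append_breaks_le H.symm hnd fun y hy a hay =>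
    h.adj_of_mem (mem_toList.1 hy) hay
  refine ⟨l', ⟨hperm.nodup_iff.2 hnd, fun a => hperm.mem_iff.2 ?_⟩, ?_⟩
  · simp only [List.mem_append, hmem, mem_toList, Z, mem_compl, mem_union]
    tauto
  · have happend := breaks_append_le (r := H.Adj) Z.toList (l.map Subtype.val)
    have hmap : breaks H.Adj (l.map Subtype.val) = breaks (H.induce (X : Set V)).Adj l :=
      breaks_map _ _ _
    rw [length_toList] at hl'
    omega

lemma degree_induce_eq [DecidableRel H.Adj] (x : (X : Set V)) :
    (H.induce (X : Set V)).degree x = #{a ∈ X | H.Adj x a} := by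
  classical
  rw [← SimpleGraph.card_neighborFinset_eq_degree, SimpleGraph.neighborFinset_eq_filter,
    ← card_map (.subtype (· ∈ (X : Set V)))]
  congr 1
  ext a
  simp [and_comm]

lemma IsCliqueJoin.degree_eq [Fintype V] [DecidableRel H.Adj] (h : IsCliqueJoin H X Y) {x : V}
    (hx : x ∈ X) : H.degree x = #{a ∈ X | H.Adj x a} + #Y := by
  classical
  rw [degree_eq_card_filter_add X]
  congr 2
  ext w
  rw [mem_filter, mem_compl]
  exact ⟨fun hw => (h.adj_iff x hx w hw.1).1 hw.2, fun hw =>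
    have hwX := disjoint_right.1 h.disjoint hw
    ⟨hwX, (h.adj_iff x hx w hwX).2 hw⟩⟩

lemma IsCliqueJoin.nonempty (h : IsCliqueJoin H X Y) (hconn : H.Connected) (hX : X.Nonempty)
    (hXc : ∃ w, w ∉ X) : Y.Nonempty := by
  obtain ⟨x, hx⟩ := hX
  obtain ⟨w, hw⟩ := hXc
  obtain ⟨p⟩ := hconn.preconnected x w
  obtain ⟨d, -, hd₁, hd₂⟩ := p.exists_boundary_dart (X : Set V) hx hw
  exact ⟨d.snd, (h.adj_iff d.fst hd₁ d.snd hd₂).1 d.adj⟩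

lemma DegreeSumClosed.exists_isCliqueJoin [Fintype V] [DecidableRel H.Adj]
    (hH : DegreeSumClosed H k) (hX : #X = δ + k) (hdeg : ∀ x ∈ X, H.degree x = δ)
    (hclique : H.IsClique (X : Set V)ᶜ) : ∃ Y, IsCliqueJoin H X Y := by
  classical
  refine ⟨({w | w ∉ X ∧ ∃ x ∈ X, H.Adj w x} : Finset V), ?_, hclique, fun x hx w hw => ?_⟩
  · exact disjoint_right.2 fun w hw => (mem_filter.1 hw).2.1
  simp only [mem_filter, mem_univ, true_and]
  refine ⟨fun h => ⟨hw, x, hx, h.symm⟩, fun ⟨_, x₀, hx₀, hwx₀⟩ => ?_⟩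
  by_contra hadj
  have hlt := hH x w (fun h => hw (h ▸ hx)) hadj
  have hinner : 0 < #{a ∈ X | H.Adj w a} := card_pos.2 ⟨x₀, mem_filter.2 ⟨hx₀, hwx₀⟩⟩
  have houter : #(Xᶜ.erase w) ≤ #{a ∈ Xᶜ | H.Adj w a} := by
    refine card_le_card fun a ha => ?_
    have ha' := mem_of_mem_erase ha
    exact mem_filter.2 ⟨ha', hclique (by simpa using hw) (by simpa using ha')
      (ne_of_mem_erase ha).symm⟩
  rw [card_erase_of_mem (mem_compl.2 hw), card_compl, hX] at houter
  have := degree_eq_card_filter_add (H := H) X w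
  have := hdeg x hx
  omega

/-- If `#Y < δ`, Ore's condition would make `H[X]` coverable by so few paths that the vertices
of `Y` could join them up. -/
lemma IsCliqueJoin.card_eq [Fintype V] [DecidableRel H.Adj] (h : IsCliqueJoin H X Y)
    (hH : ¬ PathOrderable H k) (hk : 0 < k) (hX : #X = δ + k) (hdeg : ∀ x ∈ X, H.degree x = δ)
    (hY : Y.Nonempty) : #Y = δ := by
  obtain ⟨x, hx⟩ : X.Nonempty := card_pos.1 (by omega)
  have hYpos := hY.card_pos
  have hle := h.degree_eq hx
  rw [hdeg x hx] at hle
  by_contra hne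
  have hX' : ¬ PathOrderable (H.induce (X : Set V)) (#Y + k - 1) := fun hX' =>
    hH (h.pathOrderable hX' (by omega) hk)
  obtain ⟨u, v, -, -, hlt⟩ := exists_degree_add_degree_lt hX' (by omega)
  rw [degree_induce_eq, degree_induce_eq, ← Set.toFinset_card, toFinset_coe, hX] at hlt
  have hu := h.degree_eq u.2
  have hv := h.degree_eq v.2
  rw [hdeg _ u.2] at hu
  rw [hdeg _ v.2] at hv
  omega

theorem exists_neighbors_eq_of_not_pathOrderable [Fintype V] [DecidableRel G.Adj]
    (hG : ¬ PathOrderable G k) (hk : 0 < k) (hδ : 0 < δ) (hconn : G.Connected)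
    (hmin : ∀ v, δ ≤ G.degree v) (hcard : 6 * (δ + k) ^ 2 + 12 * (δ + k) < Fintype.card V)
    (hsum : ((Fintype.card V : ℤ) - 1) * (Fintype.card V - 2 * (δ + k)) ≤ ∑ v, (G.degree v : ℤ)) :
    ∃ X Y : Finset V, #X = δ + k ∧ #Y = δ ∧ ∀ x ∈ X, ∀ v, G.Adj x v ↔ v ∈ Y := by
  classical
  obtain ⟨H, _, hGH, hHk, hH⟩ := exists_le_degreeSumClosed hG hk
  have hdegle (v : V) : G.degree v ≤ H.degree v := SimpleGraph.degree_le_of_le hGH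
  have hsum' := hsum.trans (sum_le_sum fun v _ => Nat.cast_le.2 (hdegle v))
  obtain ⟨X, hX, hdeg⟩ := hH.exists_forall_degree_eq (fun h => hHk (h ▸ pathOrderable_top hk)) hk
    (fun v => (hmin v).trans (hdegle v)) hcard hsum'
  have hclique := hH.isClique_compl hδ hX hdeg hcard hsum'
  obtain ⟨Y, hXY⟩ := hH.exists_isCliqueJoin hX hdeg hclique
  have hXc : ∃ w, w ∉ X := by
    by_contra! hall
    have := card_le_card (fun v _ => hall v : univ ⊆ X)
    rw [card_univ] at this
    nlinarith
  have hY : #Y = δ := hXY.card_eq hHk hk hX hdeg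
    (hXY.nonempty (hconn.mono hGH) (card_pos.1 (by omega)) hXc)
  refine ⟨X, Y, hX, hY, fun x hx v => ?_⟩
  have hHY : H.neighborFinset x = Y := by
    refine (eq_of_subset_of_card_le (fun y hy => ?_) ?_).symm
    · exact (H.mem_neighborFinset x y).2
        (hXY.adj_of_mem hy (disjoint_iff_ne.1 hXY.disjoint x hx y hy)).symm
    · rw [H.card_neighborFinset_eq_degree, hdeg x hx, hY]
  have hGH' : G.neighborFinset x = H.neighborFinset x := by
    refine eq_of_subset_of_card_le (fun v hv => ?_) ?_
    · exact (H.mem_neighborFinset x v).2 (hGH ((G.mem_neighborFinset x v).1 hv))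
    · rw [G.card_neighborFinset_eq_degree, H.card_neighborFinset_eq_degree, hdeg x hx]
      exact hmin x
  rw [← G.mem_neighborFinset, hGH', hHY]

end CliqueJoin

section SignlessLaplacian

variable {V : Type*}

/-- `{u, v} ↦ (x u + x v) ^ 2`, the contribution of an edge to the quadratic form of `Q(G)`. -/
def edgeSumSq (x : V → ℝ) : Sym2 V → ℝ :=
  Sym2.lift ⟨fun u v => (x u + x v) ^ 2, fun _ _ => congrArg (· ^ 2) (add_comm _ _)⟩

lemma edgeSumSq_mk (x : V → ℝ) (u v : V) : edgeSumSq x s(u, v) = (x u + x v) ^ 2 := rfl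

lemma edgeSumSq_nonneg (x : V → ℝ) (e : Sym2 V) : 0 ≤ edgeSumSq x e := by
  induction e with | _ u v => exact sq_nonneg _

lemma sum_sym2_edgeSumSq (x : V → ℝ) (W : Finset V) :
    ∑ e ∈ W.sym2, edgeSumSq x e = (#W + 2) * ∑ w ∈ W, x w ^ 2 + (∑ w ∈ W, x w) ^ 2 := by
  classical
  induction W using Finset.induction with
  | empty => simp
  | insert a W ha ih =>
    have hdisj : Disjoint ((insert a W).image fun w => s(a, w)) W.sym2 := by
      simp +contextual [disjoint_left, ha]
    have hinj : Set.InjOn (fun w => s(a, w)) (insert a W : Finset V) :=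
      fun u _ v _ h => Sym2.congr_right.1 h
    rw [sym2_insert, sum_union hdisj, ih, sum_image hinj]
    simp only [edgeSumSq_mk, sum_insert ha, card_insert_of_notMem ha, add_sq, sum_add_distrib,
      sum_const, nsmul_eq_mul, ← mul_sum, mul_assoc, Nat.cast_add, Nat.cast_one]
    ring

variable [Fintype V] {G : SimpleGraph V} [DecidableRel G.Adj] {μ t : ℝ} {x : V → ℝ}

lemma sum_neighborFinset_degree_le (hdeg : ∀ v, 0 < G.degree v) (v : V) :
    ∑ u ∈ G.neighborFinset v, G.degree u + (Fintype.card V - 1) ≤ ∑ u, G.degree u := by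
  classical
  have hrest := card_nsmul_le_sum (insert v (G.neighborFinset v))ᶜ (fun u => G.degree u) 1
    fun u _ => hdeg u
  have hv : v ∉ G.neighborFinset v := G.notMem_neighborFinset_self v
  rw [nsmul_one, Nat.cast_id, card_compl, card_insert_of_notMem hv,
    G.card_neighborFinset_eq_degree] at hrest
  rw [← sum_add_sum_compl (insert v (G.neighborFinset v)) fun u => G.degree u, sum_insert hv]
  omega

variable [DecidableEq V]

lemma signlessLaplacian_mulVec_apply (x : V → ℝ) (v : V) :
    (signlessLaplacian G *ᵥ x) v = G.degree v * x v + ∑ u ∈ G.neighborFinset v, x u := by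
  rw [signlessLaplacian, add_mulVec, Pi.add_apply, mulVec_diagonal,
    SimpleGraph.adjMatrix_mulVec_apply]

lemma exists_eigenvector_of_le_qIndex (ht : 0 < t) (h : t ≤ qIndex G) :
    ∃ (μ : ℝ) (x : V → ℝ), x ≠ 0 ∧ signlessLaplacian G *ᵥ x = μ • x ∧ t ≤ μ := by
  set S := {μ : ℝ | ∃ x : V → ℝ, x ≠ 0 ∧ signlessLaplacian G *ᵥ x = μ • x} with hS
  have hfin : S.Finite := by
    refine (Module.End.finite_hasEigenvalue (signlessLaplacian G).toLin').subset ?_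
    rintro μ ⟨x, hx, hμ⟩
    exact Module.End.hasEigenvalue_of_hasEigenvector
      ⟨Module.End.mem_eigenspace_iff.2 (by rw [toLin'_apply, hμ]), hx⟩
  have hne : S.Nonempty := by
    by_contra! hempty
    rw [qIndex, ← hS, hempty, Real.sSup_empty] at h
    exact h.not_gt ht
  obtain ⟨x, hx, hμ⟩ := hne.csSup_mem hfin
  exact ⟨_, x, hx, hμ, h⟩

/-- Merris' bound: take `v` maximizing `|x v| / G.degree v`. -/
lemma exists_mul_degree_le (hx : x ≠ 0) (hμ : signlessLaplacian G *ᵥ x = μ • x)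
    (hdeg : ∀ v, 0 < G.degree v) :
    ∃ v, μ * G.degree v ≤ G.degree v ^ 2 + ∑ u ∈ G.neighborFinset v, (G.degree u : ℝ) := by
  have hpos (v : V) : (0 : ℝ) < G.degree v := Nat.cast_pos.2 (hdeg v)
  obtain ⟨w, hw⟩ := Function.ne_iff.1 hx
  obtain ⟨v, -, hv⟩ := univ.exists_max_image (fun v => |x v| / G.degree v) ⟨w, mem_univ w⟩
  set r := |x v| / G.degree v with hr
  have hrpos : 0 < r := (div_pos (abs_pos.2 hw) (hpos w)).trans_le (hv w (mem_univ w))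
  have hxv : |x v| = r * G.degree v := by rw [hr, div_mul_cancel₀ _ (hpos v).ne']
  have hxle (u : V) : |x u| ≤ r * G.degree u := (div_le_iff₀ (hpos u)).1 (hv u (mem_univ u))
  have heig : (μ - G.degree v) * x v = ∑ u ∈ G.neighborFinset v, x u := by
    have := congrFun hμ v
    rw [signlessLaplacian_mulVec_apply, Pi.smul_apply, smul_eq_mul] at this
    linarith
  have hle : r * ((μ - G.degree v) * G.degree v) ≤
      r * ∑ u ∈ G.neighborFinset v, (G.degree u : ℝ) :=
    calc r * ((μ - G.degree v) * G.degree v) = (μ - G.degree v) * |x v| := by rw [hxv]; ring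
      _ ≤ |μ - G.degree v| * |x v| := by gcongr; exact le_abs_self _
      _ = |∑ u ∈ G.neighborFinset v, x u| := by rw [← abs_mul, heig]
      _ ≤ ∑ u ∈ G.neighborFinset v, |x u| := abs_sum_le_sum_abs _ _
      _ ≤ ∑ u ∈ G.neighborFinset v, r * G.degree u := sum_le_sum fun u _ => hxle u
      _ = _ := by rw [mul_sum]
  exact ⟨v, by linarith [le_of_mul_le_mul_left hle hrpos]⟩

/-- The Feng–Yu bound `q(G) ≤ 2 |E| / (n - 1) + n - 2`. -/
lemma card_sub_one_mul_le_sum_degree (hx : x ≠ 0) (hμ : signlessLaplacian G *ᵥ x = μ • x)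
    (hdeg : ∀ v, 0 < G.degree v) :
    ((Fintype.card V : ℝ) - 1) * (μ - (Fintype.card V - 2)) ≤ ∑ v, (G.degree v : ℝ) := by
  obtain ⟨v, hv⟩ := exists_mul_degree_le hx hμ hdeg
  have hlt (u : V) : (G.degree u : ℝ) ≤ Fintype.card V - 1 := by
    have := G.degree_lt_card_verts u
    rw [le_sub_iff_add_le]
    exact_mod_cast this
  have hd : (0 : ℝ) < G.degree v := Nat.cast_pos.2 (hdeg v)
  have hnbr : ∑ u ∈ G.neighborFinset v, (G.degree u : ℝ) ≤ G.degree v * (Fintype.card V - 1) := by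
    rw [← G.card_neighborFinset_eq_degree v, ← nsmul_eq_mul]
    exact sum_le_card_nsmul _ _ _ fun u _ => hlt u
  have hsum : ∑ u ∈ G.neighborFinset v, (G.degree u : ℝ) + (Fintype.card V - 1) ≤
      ∑ u, (G.degree u : ℝ) := by
    have := sum_neighborFinset_degree_le hdeg v
    zify [show 1 ≤ Fintype.card V from Fintype.card_pos_iff.2 ⟨v⟩] at this
    exact_mod_cast this
  have hdn := hlt v
  refine le_of_mul_le_mul_left ?_ hd
  nlinarith [mul_nonneg (sub_nonneg.2 hdn) (sub_nonneg.2 hnbr)]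

lemma card_sub_one_mul_card_sub_le_sum_degree (hx : x ≠ 0)
    (hμ : signlessLaplacian G *ᵥ x = μ • x) (hdeg : ∀ v, 0 < G.degree v) {k δ : ℕ}
    (hle : 2 * ((Fintype.card V : ℝ) - δ - k - 1) ≤ μ) :
    ((Fintype.card V : ℤ) - 1) * (Fintype.card V - 2 * (δ + k)) ≤ ∑ v, (G.degree v : ℤ) := by
  have hcard : (1 : ℝ) ≤ Fintype.card V := by
    obtain ⟨v, -⟩ := Function.ne_iff.1 hx
    exact Nat.one_le_cast.2 (Fintype.card_pos_iff.2 ⟨v⟩)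
  have hsum : ((Fintype.card V : ℝ) - 1) * (Fintype.card V - 2 * (δ + k)) ≤
      ∑ v, (G.degree v : ℝ) :=
    (mul_le_mul_of_nonneg_left (by linarith) (sub_nonneg.2 hcard)).trans
      (card_sub_one_mul_le_sum_degree hx hμ hdeg)
  exact_mod_cast hsum

lemma signlessLaplacian_eq_incMatrix_mul_transpose :
    signlessLaplacian G = G.incMatrix ℝ * (G.incMatrix ℝ)ᵀ := by
  ext u v
  rw [G.incMatrix_mul_transpose, signlessLaplacian]
  by_cases huv : u = v <;> simp [huv]

lemma incMatrix_transpose_mulVec_sq (x : V → ℝ) (e : Sym2 V) :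
    ((G.incMatrix ℝ)ᵀ *ᵥ x) e ^ 2 = if e ∈ G.edgeSet then edgeSumSq x e else 0 := by
  induction e with | _ u v
  simp only [mulVec, dotProduct, transpose_apply, SimpleGraph.incMatrix_apply',
    SimpleGraph.mk'_mem_incidenceSet_iff, SimpleGraph.mem_edgeSet, edgeSumSq_mk, ite_mul, one_mul,
    zero_mul]
  split_ifs with huv
  · rw [← sum_filter]
    simp only [huv, true_and, filter_or, filter_eq', mem_univ, if_true]
    rw [sum_union (by simpa using huv.ne), sum_singleton, sum_singleton]
  · simp [huv]

lemma dotProduct_signlessLaplacian_mulVec (x : V → ℝ) :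
    x ⬝ᵥ signlessLaplacian G *ᵥ x = ∑ e ∈ G.edgeFinset, edgeSumSq x e := by
  rw [signlessLaplacian_eq_incMatrix_mul_transpose, ← mulVec_mulVec, dotProduct_mulVec,
    ← mulVec_transpose, dotProduct]
  simp only [← sq, incMatrix_transpose_mulVec_sq, ← sum_filter]
  congr 1
  ext e
  simp

end SignlessLaplacian

section RayleighQuotient

lemma mul_add_sq_le (t a s : ℝ) :
    t * (a + s) ^ 2 ≤ (t + 1) * a ^ 2 + t * (t + 1) * s ^ 2 := by
  nlinarith [sq_nonneg (a - t * s)]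

lemma le_mul_add_sq (t a s : ℝ) :
    (t - 1) * a ^ 2 - t * (t - 1) * s ^ 2 ≤ t * (a + s) ^ 2 := by
  nlinarith [sq_nonneg (a + t * s)]

/-- The coefficients of `a ^ 2`, `ζ` and `ξ` in `h` differ by a positive amount because
`t = 2 * c * d + 5` exceeds `4 * e + c * d` and `M` exceeds `2 * c * (t + 1) + 2 * e * (t - 1)`. -/
lemma add_add_nonpos_of_energy_le {M c d e t a ζ ξ : ℝ} (hd : 1 ≤ d) (hdc : d ≤ c)
    (he : c * d + 1 ≤ 4 * e) (he' : 4 * e ≤ c * d + 4) (ht : t = 2 * (c * d) + 5)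
    (hM : (c * d + 6 * c + d + 9) * (c * d + 1) - c ≤ M) (hζ : 0 ≤ ζ) (hξ : 0 ≤ ξ)
    (h : t * (M * ζ + 2 * (M - 1) * ξ) + e * (4 * (t - 1) * a ^ 2 - 2 * t * (t - 1) * ζ) ≤
      c * d * (t + 1) * a ^ 2 + 2 * t * (t + 1) * (d * ξ + c * ζ)) :
    a ^ 2 + ζ + ξ ≤ 0 := by
  have hcd : c ≤ c * d := by nlinarith
  have ha_coeff : 1 ≤ 4 * e * (t - 1) - c * d * (t + 1) := by nlinarith
  have hζ_coeff : 1 ≤ M - 2 * c * (t + 1) - 2 * e * (t - 1) := by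
    rw [ht]
    nlinarith
  have hξ_coeff : 1 ≤ 2 * (M - 1) - 2 * d * (t + 1) := by
    rw [ht]
    nlinarith
  have ht1 : 1 ≤ t := by nlinarith
  have h₁ := le_mul_of_one_le_left (sq_nonneg a) ha_coeff
  have h₂ := le_mul_of_one_le_left hζ (one_le_mul_of_one_le_of_one_le ht1 hζ_coeff)
  have h₃ := le_mul_of_one_le_left hξ (one_le_mul_of_one_le_of_one_le ht1 hξ_coeff)
  linarith

variable {V : Type*} {X Y W : Finset V} {x : V → ℝ} {t a : ℝ}

lemma mul_sum_product_add_sq_le (ht : 0 ≤ t) (hY : Y ⊆ W) :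
    t * ∑ p ∈ X ×ˢ Y, (x p.1 + x p.2) ^ 2 ≤ #X * #Y * (t + 1) * a ^ 2 +
      2 * t * (t + 1) * (#Y * ∑ u ∈ X, x u ^ 2 + #X * ∑ w ∈ W, (x w - a) ^ 2) := by
  have hpair (u v : V) : t * (x u + x v) ^ 2 ≤
      (t + 1) * a ^ 2 + 2 * t * (t + 1) * (x u ^ 2 + (x v - a) ^ 2) := by
    have hsq : t * (t + 1) * (x u + (x v - a)) ^ 2 ≤
        t * (t + 1) * (2 * (x u ^ 2 + (x v - a) ^ 2)) := by gcongr; exact add_sq_le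
    linear_combination mul_add_sq_le t a (x u + (x v - a)) + hsq
  calc t * ∑ p ∈ X ×ˢ Y, (x p.1 + x p.2) ^ 2
      ≤ ∑ p ∈ X ×ˢ Y, ((t + 1) * a ^ 2 + 2 * t * (t + 1) * (x p.1 ^ 2 + (x p.2 - a) ^ 2)) := by
        rw [mul_sum]
        exact sum_le_sum fun p _ => hpair p.1 p.2
    _ = #X * #Y * (t + 1) * a ^ 2 +
          2 * t * (t + 1) * (#Y * ∑ u ∈ X, x u ^ 2 + #X * ∑ w ∈ Y, (x w - a) ^ 2) := by
        simp only [sum_add_distrib, ← mul_sum, sum_product, sum_const, nsmul_eq_mul, card_product]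
        push_cast
        ring
    _ ≤ _ := by
        gcongr

lemma card_mul_le_mul_sum_edgeSumSq (ht : 1 ≤ t) {T : Finset (Sym2 V)} (hT : T ⊆ W.sym2)
    (hdiag : ∀ e ∈ T, ¬ e.IsDiag) :
    #T * (4 * (t - 1) * a ^ 2 - 2 * t * (t - 1) * ∑ w ∈ W, (x w - a) ^ 2) ≤
      t * ∑ e ∈ T, edgeSumSq x e := by
  classical
  rw [← nsmul_eq_mul, mul_sum T]
  refine card_nsmul_le_sum T (fun e => t * edgeSumSq x e) _ fun e he => ?_
  induction e with | _ u v
  have huv : u ≠ v := hdiag _ he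
  have hsub : {u, v} ⊆ W := by
    simpa [insert_subset_iff] using mk_mem_sym2_iff.1 (hT he)
  have hζ : (x u - a) ^ 2 + (x v - a) ^ 2 ≤ ∑ w ∈ W, (x w - a) ^ 2 := by
    rw [← sum_pair (f := fun w => (x w - a) ^ 2) huv]
    exact sum_le_sum_of_subset_of_nonneg hsub fun _ _ _ => sq_nonneg _
  have hsq : t * (t - 1) * ((x u - a) + (x v - a)) ^ 2 ≤
      t * (t - 1) * (2 * ∑ w ∈ W, (x w - a) ^ 2) :=
    mul_le_mul_of_nonneg_left (add_sq_le.trans (by gcongr))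
      (mul_nonneg (zero_le_one.trans ht) (sub_nonneg.2 ht))
  rw [edgeSumSq_mk]
  linear_combination le_mul_add_sq t (2 * a) ((x u - a) + (x v - a)) + hsq

lemma sum_sq_eq_card_mul_sq_add (ha : ∑ w ∈ W, x w = #W * a) :
    ∑ w ∈ W, x w ^ 2 = #W * a ^ 2 + ∑ w ∈ W, (x w - a) ^ 2 := by
  simp only [sub_sq, sum_add_distrib, sum_sub_distrib, ← mul_sum, ← sum_mul, ha, sum_const,
    nsmul_eq_mul]
  ring

variable [Fintype V] [DecidableEq V] {G : SimpleGraph V} [DecidableRel G.Adj]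

lemma eq_zero_of_sq_add_sum_add_sum_nonpos
    (h : a ^ 2 + ∑ w ∈ Xᶜ, (x w - a) ^ 2 + ∑ u ∈ X, x u ^ 2 ≤ 0) : x = 0 := by
  have hζ := sum_nonneg fun w (_ : w ∈ Xᶜ) => sq_nonneg (x w - a)
  have hξ := sum_nonneg fun u (_ : u ∈ X) => sq_nonneg (x u)
  obtain rfl : a = 0 := sq_eq_zero_iff.1 (by linarith [sq_nonneg a])
  ext v
  refine sq_eq_zero_iff.1 ((sq_nonneg _).antisymm' ?_)
  by_cases hv : v ∈ X
  · linarith [single_le_sum (fun u _ => sq_nonneg (x u)) hv]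
  · linarith [single_le_sum (fun w _ => sq_nonneg (x w - 0)) (mem_compl.2 hv)]

/-- The nonadjacent pairs of distinct vertices outside `X`: the edges deleted from `B(n,k,δ)`. -/
def nonEdgesOutside (G : SimpleGraph V) [DecidableRel G.Adj] (X : Finset V) : Finset (Sym2 V) :=
  {e ∈ Xᶜ.sym2 | ¬ e.IsDiag ∧ e ∉ G.edgeSet}

lemma mk_mem_nonEdgesOutside {u v : V} :
    s(u, v) ∈ nonEdgesOutside G X ↔ (u ∉ X ∧ v ∉ X) ∧ u ≠ v ∧ ¬ G.Adj u v := by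
  simp [nonEdgesOutside]

/-- Apart from the edges at `X`, the edges of `G` together with `T` and the loops on `Xᶜ` are
distinct unordered pairs in `Xᶜ`. -/
lemma sum_edgeSumSq_add_le {T : Finset (Sym2 V)} (hT : T ⊆ nonEdgesOutside G X)
    (hadj : ∀ u ∈ X, ∀ v, G.Adj u v → v ∈ Y) (x : V → ℝ) :
    ∑ e ∈ G.edgeFinset, edgeSumSq x e + ∑ e ∈ T, edgeSumSq x e + 4 * ∑ w ∈ Xᶜ, x w ^ 2 ≤
      ∑ e ∈ Xᶜ.sym2, edgeSumSq x e + ∑ p ∈ X ×ˢ Y, (x p.1 + x p.2) ^ 2 := by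
  have hET : Disjoint G.edgeFinset T := by
    refine disjoint_right.2 fun e he => ?_
    simpa using (mem_filter.1 (hT he)).2.2
  have hloops : Disjoint (G.edgeFinset ∪ T) (Xᶜ.image Sym2.diag) := by
    refine disjoint_right.2 fun e he heET => ?_
    obtain ⟨w, -, rfl⟩ := mem_image.1 he
    rcases mem_union.1 heET with h | h
    · exact G.not_isDiag_of_mem_edgeFinset h (Sym2.diag_isDiag w)
    · exact (mem_filter.1 (hT h)).2.1 (Sym2.diag_isDiag w)
  have hsub : G.edgeFinset ∪ T ∪ Xᶜ.image Sym2.diag ⊆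
      Xᶜ.sym2 ∪ (X ×ˢ Y).image fun p => s(p.1, p.2) := by
    refine union_subset (union_subset (fun e he => ?_) fun e he => ?_) fun e he => ?_
    · induction e with | _ u v
      have huv : G.Adj u v := by simpa using he
      rw [mem_union, mk_mem_sym2_iff, mem_compl, mem_compl, mem_image]
      by_cases hu : u ∈ X
      · exact .inr ⟨(u, v), mem_product.2 ⟨hu, hadj u hu v huv⟩, rfl⟩
      by_cases hv : v ∈ X
      · exact .inr ⟨(v, u), mem_product.2 ⟨hv, hadj v hv u huv.symm⟩, Sym2.eq_swap⟩
      exact .inl ⟨hu, hv⟩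
    · exact mem_union_left _ (mem_filter.1 (hT he)).1
    · obtain ⟨w, hw, rfl⟩ := mem_image.1 he
      exact mem_union_left _ (mk_mem_sym2_iff.2 ⟨hw, hw⟩)
  have hdiag : ∑ e ∈ Xᶜ.image Sym2.diag, edgeSumSq x e = 4 * ∑ w ∈ Xᶜ, x w ^ 2 := by
    rw [sum_image Sym2.diag_injective.injOn, mul_sum]
    exact sum_congr rfl fun w _ => by rw [Sym2.diag, edgeSumSq_mk]; ring
  rw [← hdiag, ← sum_union hET, ← sum_union hloops]
  calc _ ≤ _ := sum_le_sum_of_subset_of_nonneg hsub fun e _ _ => edgeSumSq_nonneg x e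
    _ ≤ ∑ e ∈ Xᶜ.sym2, edgeSumSq x e +
        ∑ e ∈ (X ×ˢ Y).image fun p => s(p.1, p.2), edgeSumSq x e := by
      rw [← sum_union_inter]
      exact le_add_of_nonneg_right (sum_nonneg fun e _ => edgeSumSq_nonneg x e)
    _ ≤ _ := by
      gcongr
      exact sum_image_le_of_nonneg fun e _ => edgeSumSq_nonneg x e

lemma card_mul_sum_sub_sq_add_le {T : Finset (Sym2 V)} (hT : T ⊆ nonEdgesOutside G X)
    (hadj : ∀ u ∈ X, ∀ v, G.Adj u v → v ∈ Y) (ha : ∑ w ∈ Xᶜ, x w = #Xᶜ * a)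
    (hle : 2 * ((#Xᶜ : ℝ) - 1) * (x ⬝ᵥ x) ≤ x ⬝ᵥ signlessLaplacian G *ᵥ x) :
    #Xᶜ * ∑ w ∈ Xᶜ, (x w - a) ^ 2 + 2 * ((#Xᶜ : ℝ) - 1) * ∑ u ∈ X, x u ^ 2 +
      ∑ e ∈ T, edgeSumSq x e ≤ ∑ p ∈ X ×ˢ Y, (x p.1 + x p.2) ^ 2 := by
  have henergy := sum_edgeSumSq_add_le hT hadj x
  have hnorm : x ⬝ᵥ x = ∑ u ∈ X, x u ^ 2 + ∑ w ∈ Xᶜ, x w ^ 2 := by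
    rw [sum_add_sum_compl, dotProduct]
    simp only [sq]
  rw [← dotProduct_signlessLaplacian_mulVec, sum_sym2_edgeSumSq, ha] at henergy
  rw [hnorm] at hle
  rw [sum_sq_eq_card_mul_sq_add ha] at henergy hle
  linarith

theorem dotProduct_signlessLaplacian_mulVec_lt (hx : x ≠ 0) (hY : Y.Nonempty) (hYX : #Y ≤ #X)
    (hadj : ∀ u ∈ X, ∀ v, G.Adj u v ↔ v ∈ Y) (hT : #X * #Y / 4 < #(nonEdgesOutside G X))
    (hcard : (#X * #Y + 6 * #X + #Y + 9) * (#X * #Y + 1) ≤ Fintype.card V) :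
    x ⬝ᵥ signlessLaplacian G *ᵥ x < 2 * ((Fintype.card V : ℝ) - #X - 1) * (x ⬝ᵥ x) := by
  by_contra! hle
  obtain ⟨T, hTsub, hTcard⟩ := exists_subset_card_eq (Nat.succ_le_of_lt hT)
  have he : #X * #Y + 1 ≤ 4 * #T ∧ 4 * #T ≤ #X * #Y + 4 := by omega
  have hYc : Y ⊆ Xᶜ := fun y hy => mem_compl.2 fun hyX => G.irrefl ((hadj y hyX y).2 hy)
  have hMcard : (Fintype.card V : ℝ) - #X = #Xᶜ := by
    rw [card_compl, Nat.cast_sub (card_le_univ X)]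
  have hMpos : (#Xᶜ : ℝ) ≠ 0 := Nat.cast_ne_zero.2 (hY.mono hYc).card_ne_zero
  rw [hMcard] at hle
  obtain ⟨a, ha⟩ : ∃ a, ∑ w ∈ Xᶜ, x w = #Xᶜ * a :=
    ⟨(∑ w ∈ Xᶜ, x w) / #Xᶜ, (mul_div_cancel₀ _ hMpos).symm⟩
  obtain ⟨t, ht⟩ : ∃ t : ℝ, t = 2 * (#X * #Y) + 5 := ⟨_, rfl⟩
  have ht1 : 1 ≤ t := by rw [ht]; linarith [show (0 : ℝ) ≤ #X * #Y by positivity]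
  have henergy := mul_le_mul_of_nonneg_left
    (card_mul_sum_sub_sq_add_le hTsub (fun u hu v => (hadj u hu v).1) ha hle)
    (zero_le_one.trans ht1)
  have hcross := mul_sum_product_add_sq_le (x := x) (a := a) (X := X) (zero_le_one.trans ht1) hYc
  have hmissing := card_mul_le_mul_sum_edgeSumSq (x := x) (a := a) ht1
    (hTsub.trans (filter_subset _ _)) fun e he => (mem_filter.1 (hTsub he)).2.1
  have hzero := add_add_nonpos_of_energy_le (M := #Xᶜ) (c := #X) (d := #Y) (e := #T) (a := a)
    (by exact_mod_cast hY.card_pos) (by exact_mod_cast hYX) (by exact_mod_cast he.1)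
    (by exact_mod_cast he.2) ht (by rw [← hMcard]; gcongr; exact_mod_cast hcard)
    (sum_nonneg fun w _ => sq_nonneg (x w - a)) (sum_nonneg fun u _ => sq_nonneg (x u))
    (by linarith)
  exact hx (eq_zero_of_sq_add_sum_add_sum_nonpos hzero)

end RayleighQuotient

section MembershipInB1

variable {n k δ : ℕ} {X Y : Finset (Fin n)} {G : SimpleGraph (Fin n)} [DecidableRel G.Adj]

lemma exists_perm_lt_card_iff (f : Fin n → ℕ) :
    ∃ e : Equiv.Perm (Fin n), ∀ a m, (e a : ℕ) < #{i | f i ≤ m} ↔ f a ≤ m := by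
  refine ⟨(Tuple.sort f).symm, fun a m => ?_⟩
  have hcard : #{i | (f ∘ Tuple.sort f) i ≤ m} = #{i | f i ≤ m} :=
    card_equiv (Tuple.sort f) fun i => by simp
  rw [← hcard, Tuple.lt_card_le_iff_apply_le_of_monotone (Tuple.monotone_sort f),
    Function.comp_apply, Equiv.apply_symm_apply]

lemma exists_perm_lt_card_iff_mem (hXY : Disjoint X Y) :
    ∃ e : Equiv.Perm (Fin n), (∀ a, (e a : ℕ) < #Y ↔ a ∈ Y) ∧
      ∀ a, (e a : ℕ) < n - #X ↔ a ∉ X := by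
  classical
  let f : Fin n → ℕ := fun a => if a ∈ Y then 0 else if a ∈ X then 2 else 1
  have hfY (a : Fin n) : f a ≤ 0 ↔ a ∈ Y := by grind
  have hfX (a : Fin n) : f a ≤ 1 ↔ a ∉ X := by grind [disjoint_left]
  obtain ⟨e, he⟩ := exists_perm_lt_card_iff f
  have hcardY : #{a | f a ≤ 0} = #Y := by simp [hfY]
  have hcardX : #{a | f a ≤ 1} = n - #X := by
    simp only [hfX, ← mem_compl, filter_univ_mem, card_compl, Fintype.card_fin]
  exact ⟨e, fun a => by rw [← hcardY, he, hfY], fun a => by rw [← hcardX, he, hfX]⟩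

lemma adj_iff_of_neighbors_eq (hadj : ∀ u ∈ X, ∀ v, G.Adj u v ↔ v ∈ Y) (a b : Fin n) :
    G.Adj a b ↔ (a ≠ b ∧ (a ∈ Y ∨ b ∈ Y ∨ a ∉ X ∧ b ∉ X)) ∧ s(a, b) ∉ nonEdgesOutside G X := by
  have hYX : ∀ y ∈ Y, y ∉ X := fun y hy hyX => G.irrefl ((hadj y hyX y).2 hy)
  rw [mk_mem_nonEdgesOutside]
  by_cases ha : a ∈ X
  · have := hadj a ha b
    grind
  by_cases hb : b ∈ X
  · have := hadj b hb a
    grind [G.adj_comm a b]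
  · grind [G.ne_of_adj]

theorem inB1_of_card_nonEdgesOutside_le (hX : #X = δ + k) (hY : #Y = δ)
    (hadj : ∀ u ∈ X, ∀ v, G.Adj u v ↔ v ∈ Y)
    (hcard : #(nonEdgesOutside G X) ≤ δ * (δ + k) / 4) : InB1 n k δ G := by
  have hXY : Disjoint X Y := disjoint_left.2 fun y hyX hy => G.irrefl ((hadj y hyX y).2 hy)
  obtain ⟨e, heY, heX⟩ := exists_perm_lt_card_iff_mem hXY
  rw [hX] at heX
  rw [hY] at heY
  have hB (a b : Fin n) : (Bgraph n k δ).Adj (e a) (e b) ↔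
      a ≠ b ∧ (a ∈ Y ∨ b ∈ Y ∨ a ∉ X ∧ b ∉ X) := by
    simp only [Bgraph, heY, heX, e.injective.ne_iff]
  refine ⟨(nonEdgesOutside G X).image (Sym2.map e), ?_, card_image_le.trans hcard,
    ⟨⟨e, fun {a b} => ?_⟩⟩⟩
  · refine forall_mem_image.2 fun p hp => ?_
    induction p with | _ a b
    obtain ⟨⟨ha, hb⟩, hne, -⟩ := mk_mem_nonEdgesOutside.1 hp
    refine ⟨(hB a b).2 ⟨hne, .inr (.inr ⟨ha, hb⟩)⟩, fun v hv => ?_⟩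
    obtain rfl | rfl := Sym2.mem_iff.1 hv
    exacts [(heX a).2 ha, (heX b).2 hb]
  · rw [SimpleGraph.deleteEdges_adj, hB, mem_coe, ← Sym2.map_mk,
      (Sym2.map.injective e.injective).mem_finset_image, ← adj_iff_of_neighbors_eq hadj]

end MembershipInB1

lemma six_mul_sq_add_lt {k δ n : ℕ} (hδ : 1 ≤ δ)
    (hn : (δ ^ 2 + k * δ + 7 * δ + 6 * k + 9) * (δ ^ 2 + k * δ + 1) ≤ n) :
    6 * (δ + k) ^ 2 + 12 * (δ + k) < n := by
  have hle : δ + k ≤ δ ^ 2 + k * δ := by nlinarith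
  calc 6 * (δ + k) ^ 2 + 12 * (δ + k) < (6 * (δ + k) + 9) * (δ + k + 1) := by linarith
    _ ≤ (δ ^ 2 + k * δ + 7 * δ + 6 * k + 9) * (δ ^ 2 + k * δ + 1) := by gcongr; omega
    _ ≤ n := hn

theorem qIndex_kPathCoverable_general (k δ n : ℕ) (hk : 1 ≤ k) (hδ : 1 ≤ δ)
    (hn : (δ ^ 2 + k * δ + 7 * δ + 6 * k + 9) * (δ ^ 2 + k * δ + 1) ≤ n)
    (G : SimpleGraph (Fin n)) [DecidableRel G.Adj]
    (hconn : G.Connected) (hmin : ∀ v, δ ≤ G.degree v)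
    (hq : 2 * ((n : ℝ) - δ - k - 1) ≤ qIndex G) :
    PathCoverable G k ∨ InB1 n k δ G := by
  have : Nonempty (Fin n) := hconn.nonempty
  by_cases hG : PathOrderable G k
  · exact .inl hG.pathCoverable
  have hcard := six_mul_sq_add_lt hδ hn
  have hpos : 0 < 2 * ((n : ℝ) - δ - k - 1) := by
    have : (δ : ℝ) + k + 1 < n := by exact_mod_cast (by nlinarith : δ + k + 1 < n)
    linarith
  obtain ⟨μ, x, hx, hμ, hle⟩ := exists_eigenvector_of_le_qIndex hpos hq
  obtain ⟨X, Y, hX, hY, hadj⟩ := exists_neighbors_eq_of_not_pathOrderable hG hk hδ hconn hmin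
    (by rwa [Fintype.card_fin])
    (card_sub_one_mul_card_sub_le_sum_degree hx hμ (fun v => hδ.trans (hmin v))
      (by rwa [Fintype.card_fin]))
  refine .inr (inB1_of_card_nonEdgesOutside_le hX hY hadj (not_lt.1 fun hmany => ?_))
  have hlt := dotProduct_signlessLaplacian_mulVec_lt hx (card_pos.1 (hδ.trans_eq hY.symm))
    (by omega) hadj (by rwa [hX, hY, mul_comm])
    (by rw [hX, hY, Fintype.card_fin]; convert hn using 1; ring)
  rw [hμ, dotProduct_smul, smul_eq_mul, Fintype.card_fin, hX] at hlt
  push_cast at hlt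
  linarith [lt_of_mul_lt_mul_right hlt (dotProduct_star_self_nonneg x)]

/-- **Theorem 1.4** (main theorem): a tight Q-index condition for a connected graph with
given minimum degree to be k-path-coverable. -/
theorem qIndex_kPathCoverable (k δ n : ℕ) (hk : 1 ≤ k) (hδ : 2 ≤ δ)
    (hn : (δ ^ 2 + k * δ + 7 * δ + 6 * k + 9) * (δ ^ 2 + k * δ + 1) ≤ n)
    (G : SimpleGraph (Fin n)) [DecidableRel G.Adj]
    (hconn : G.Connected) (hmin : ∀ v, δ ≤ G.degree v)
    (hq : 2 * ((n : ℝ) - δ - k - 1) ≤ qIndex G) :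
    PathCoverable G k ∨ InB1 n k δ G :=
  qIndex_kPathCoverable_general k δ n hk (one_le_two.trans hδ) hn G hconn hmin hq
end

section
/- Let t ≥ 1 and let G be a simple graph of order n with minimum degree δ(G) ≥ t. If n ≥ t³ + t² + 2t + 5 and the adjacency spectral radius satisfies λ(G) ≥ n − t − 2, then G is traceable, unless G = K_{t+1} ∪ K_{n−t−1} or G = K_t ∨ (K_{n−2t−1} ∪ (t+1)K₁). -/
open Finset Matrix

/-- The disjoint union `K_{t+1} ∪ K_{n-t-1}` on `Fin n`: the first `t+1` vertices form one
clique, the remaining `n-t-1` vertices form the other. -/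
def unionKK (n t : ℕ) : SimpleGraph (Fin n) where
  Adj i j := i ≠ j ∧ (((i : ℕ) < t + 1 ∧ (j : ℕ) < t + 1) ∨
      (t + 1 ≤ (i : ℕ) ∧ t + 1 ≤ (j : ℕ)))
  symm := by
    constructor
    rintro i j ⟨hne, h⟩
    exact ⟨hne.symm, by tauto⟩
  loopless := by
    constructor
    rintro i ⟨h, -⟩
    exact h rfl

/-!
A positive vector `y` whose neighbour sums are everywhere below `N * y` certifies `λ(G) < N`. If
`G` is not traceable, let `H ⊇ G` be maximal non-traceable; Chvátal's condition then gives some `k`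
for which `H` has more than `k` vertices of degree at most `k` and at least `n - k` vertices of
degree at most `n - k - 2`. For `k > t` a vector with two values shows `λ(G) < n - t - 2`, so
`k = t`, and the same kind of vector shows that the set `A` of vertices of degree `t` has exactly
`t + 1` elements. Two non-adjacent vertices off `A` would again force `λ(G) < n - t - 2`, so `Aᶜ` is
a clique and `H = G`. By maximality all vertices of `A` have the same set `T` of neighbours off `A`.
If `0 < #T < t`, then `A` together with all but one vertex of `T` has a Hamilton path by Ore's
theorem, which continues through the remaining vertex of `T` into the clique; the cases `T = ∅` and
`#T ≥ t` are the two exceptional graphs.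
-/

section Lists

variable {V : Type*}

theorem countP_add_countP_le_of_isChain {p q : V → Bool} {a : V} {l : List V}
    (hchain : (a :: l).IsChain fun x y => ¬(p x ∧ q y))
    (hlast : p ((a :: l).getLast (List.cons_ne_nil a l)) = false) :
    (a :: l).countP p + l.countP q ≤ l.length := by
  induction l generalizing a with
  | nil => simpa using hlast
  | cons b l ih =>
    obtain ⟨hab, hchain⟩ := List.isChain_cons_cons.mp hchain
    have := ih hchain (by simpa using hlast)
    rw [List.countP_cons (a := a), List.countP_cons (p := q), List.length_cons]
    split_ifs with hp hq <;> grind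

theorem isChain_of_isClique {G : SimpleGraph V} {s : Set V} (hs : G.IsClique s) {l : List V}
    (hnd : l.Nodup) (hl : ∀ v ∈ l, v ∈ s) : l.IsChain G.Adj :=
  (hnd.imp_of_mem fun hx hy hxy => hs (hl _ hx) (hl _ hy) hxy).isChain

theorem isChain_append_of_rel {r : V → V → Prop} {l₁ l₂ : List V} {u v : V} (h₁ : l₁.IsChain r)
    (h₂ : l₂.IsChain r) (hu : u ∈ l₁.getLast?) (hv : v ∈ l₂.head?) (huv : r u v) :
    (l₁ ++ l₂).IsChain r :=
  List.isChain_append.mpr ⟨h₁, h₂, fun _ hx _ hy =>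
    Option.mem_unique hu hx ▸ Option.mem_unique hv hy ▸ huv⟩

theorem isChain_adj_reverse {G : SimpleGraph V} {l : List V} (hl : l.IsChain G.Adj) :
    l.reverse.IsChain G.Adj :=
  List.isChain_reverse.mpr (hl.imp fun _ _ h => h.symm)

theorem exists_eq_append_of_isChain_sup_edge {G : SimpleGraph V} {u v : V} {l : List V}
    (hnd : l.Nodup) (hl : l.IsChain (G ⊔ SimpleGraph.edge u v).Adj) (hG : ¬l.IsChain G.Adj) :
    ∃ l₁ l₂, l = l₁ ++ l₂ ∧ l₁.IsChain G.Adj ∧ l₂.IsChain G.Adj ∧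
      ∃ x ∈ l₁.getLast?, ∃ y ∈ l₂.head?, s(x, y) = s(u, v) := by
  have eq_of_not_adj {x y : V} (h : (G ⊔ SimpleGraph.edge u v).Adj x y) (hxy : ¬G.Adj x y) :
      s(x, y) = s(u, v) := by
    rw [SimpleGraph.sup_adj, SimpleGraph.edge_adj] at h
    grind
  obtain ⟨x, y, p, q, rfl, hxy⟩ : ∃ x y p q, l = p ++ x :: y :: q ∧ ¬G.Adj x y := by
    simpa [List.isChain_iff_forall_rel_of_append_cons_cons] using hG
  rw [List.isChain_append_cons_cons] at hl
  have hxyuv := eq_of_not_adj hl.2.1 hxy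
  have isChain_of_notMem {l : List V} (hl : l.IsChain (G ⊔ SimpleGraph.edge u v).Adj)
      (hmem : x ∉ l ∨ y ∉ l) : l.IsChain G.Adj := by
    refine hl.imp_of_mem_imp fun a b ha hb hab => ?_
    by_contra h
    have := hxyuv.trans (eq_of_not_adj hab h).symm
    grind
  refine ⟨p ++ [x], y :: q, by simp, isChain_of_notMem hl.1 ?_, isChain_of_notMem hl.2.2 ?_,
    x, by simp, y, by simp, hxyuv⟩ <;> grind

end Lists

section Ore

variable {V : Type*}

theorem traceable_iff_exists_list [Nonempty V] {G : SimpleGraph V} :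
    Traceable G ↔ ∃ l : List V, l.Nodup ∧ l.IsChain G.Adj ∧ ∀ v, v ∈ l := by
  constructor
  · rintro ⟨u, v, p, hp, hmem⟩
    exact ⟨p.support, hp.support_nodup, p.isChain_adj_support, hmem⟩
  · rintro ⟨l, hnd, hchain, hmem⟩
    have hne : l ≠ [] := List.ne_nil_of_mem (hmem (Classical.arbitrary V))
    refine ⟨_, _, .ofSupport l hne hchain, ?_, ?_⟩
    · rwa [SimpleGraph.Walk.isPath_def, SimpleGraph.Walk.support_ofSupport]
    · rwa [SimpleGraph.Walk.support_ofSupport]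

theorem Traceable.mono {G H : SimpleGraph V} (hGH : G ≤ H) (hG : Traceable G) : Traceable H := by
  obtain ⟨u, v, p, hp, hmem⟩ := hG
  exact ⟨u, v, p.mapLe hGH, hp.mapLe hGH, fun w => by simpa using hmem w⟩

theorem traceable_top [Finite V] [Nonempty V] : Traceable (⊤ : SimpleGraph V) := by
  cases nonempty_fintype V
  exact traceable_iff_exists_list.mpr ⟨univ.toList, nodup_toList _,
    isChain_of_isClique (s := Set.univ) (fun _ _ _ _ h => h) (nodup_toList _) (by simp), by simp⟩

-- Rotations: if `x, y` are consecutive on `l₁` with `u ~ x` and `v ~ y`, then following `l₁` up to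
-- `x`, jumping to its end `u`, returning to `y` and jumping to `v` merges the two paths.
theorem countP_adj_add_countP_adj_lt {G : SimpleGraph V} [DecidableRel G.Adj]
    (hG : ¬Traceable G) {l₁ l₂ : List V} {u v : V} (hnd : (l₁ ++ l₂).Nodup)
    (hmem : ∀ w, w ∈ l₁ ++ l₂) (h₁ : l₁.IsChain G.Adj) (h₂ : l₂.IsChain G.Adj)
    (hu : u ∈ l₁.getLast?) (hv : v ∈ l₂.head?) :
    l₁.countP (G.Adj u ·) + l₁.countP (G.Adj v ·) < l₁.length := by
  have : Nonempty V := ⟨u⟩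
  have not_isChain_of_perm {l : List V} (hl : l.Perm (l₁ ++ l₂)) : ¬l.IsChain G.Adj := fun h =>
    hG (traceable_iff_exists_list.mpr
      ⟨l, hl.nodup_iff.mpr hnd, h, fun w => hl.mem_iff.mpr (hmem w)⟩)
  obtain ⟨a, l, rfl⟩ : ∃ a l, l₁ = a :: l :=
    List.ne_nil_iff_exists_cons.mp (by rintro rfl; simp at hu)
  have hva : ¬G.Adj v a := fun hva =>
    not_isChain_of_perm ((List.reverse_perm _).append_right l₂)
      (isChain_append_of_rel (isChain_adj_reverse h₁) h₂ (by simp) hv hva.symm)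
  have hcross : (a :: l).IsChain fun x y => ¬(G.Adj u x ∧ G.Adj v y) := by
    refine List.isChain_iff_forall_rel_of_append_cons_cons.mpr fun x y p q hl ⟨hux, hvy⟩ => ?_
    rw [hl] at hu h₁ not_isChain_of_perm
    obtain ⟨hp, -, hq⟩ := List.isChain_append_cons_cons.mp h₁
    have hq' : u ∈ (y :: q).reverse.head? := by simpa [List.getLast?_cons] using hu
    refine not_isChain_of_perm (l := (p ++ [x]) ++ ((y :: q).reverse ++ l₂)) ?_ ?_
    · simpa using ((List.reverse_perm (y :: q)).append_right l₂).append_left (p ++ [x])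
    · exact isChain_append_of_rel hp
        (isChain_append_of_rel (isChain_adj_reverse hq) h₂ (by simp) hv hvy.symm)
        (by simp) (List.mem_head?_append_of_mem_head? hq') hux.symm
  have hlast : (a :: l).getLast (List.cons_ne_nil a l) = u := by
    simpa [List.getLast?_eq_getLast_of_ne_nil] using hu
  have := countP_add_countP_le_of_isChain (p := (G.Adj u ·)) (q := (G.Adj v ·))
    (by simpa using hcross) (by simp [hlast])
  rw [List.countP_cons (p := (G.Adj v ·)), List.length_cons]
  simp only [hva, decide_false, Bool.false_eq_true, if_false]
  lia

theorem degree_eq_countP [Fintype V] {G : SimpleGraph V} [DecidableRel G.Adj] {l : List V}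
    (hnd : l.Nodup) (hmem : ∀ v, v ∈ l) (u : V) : G.degree u = l.countP (G.Adj u ·) := by
  classical
  rw [List.countP_eq_length_filter, ← G.card_neighborFinset_eq_degree,
    ← List.toFinset_card_of_nodup (hnd.filter _)]
  congr 1
  ext v
  simp [hmem]

theorem degree_add_degree_add_two_le [Fintype V] {G : SimpleGraph V}
    [DecidableRel G.Adj] (hG : Maximal (fun K => ¬Traceable K) G) {u v : V}
    (hne : u ≠ v) (huv : ¬G.Adj u v) : G.degree u + G.degree v + 2 ≤ Fintype.card V := by
  have : Nonempty V := ⟨u⟩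
  obtain ⟨l, hnd, hchain, hmem⟩ := traceable_iff_exists_list.mp
    (not_not.mp (hG.not_prop_of_gt (SimpleGraph.lt_sup_edge G u v hne huv)))
  have hGl : ¬l.IsChain G.Adj := fun h =>
    hG.prop (traceable_iff_exists_list.mpr ⟨l, hnd, h, hmem⟩)
  obtain ⟨l₁, l₂, rfl, h₁, h₂, x, hx, y, hy, hxy⟩ :=
    exists_eq_append_of_isChain_sup_edge hnd hchain hGl
  have hcard : l₁.length + l₂.length = Fintype.card V := by
    rw [← List.length_append, ← Finset.card_univ, ← Finset.length_toList]
    exact ((List.perm_ext_iff_of_nodup hnd (nodup_toList _)).mpr (by simp [hmem])).length_eq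
  have hl₁ := countP_adj_add_countP_adj_lt hG.prop hnd hmem h₁ h₂ hx hy
  have hl₂ := countP_adj_add_countP_adj_lt (l₁ := l₂.reverse) (l₂ := l₁.reverse) (u := y) (v := x)
    hG.prop (by simpa using List.nodup_reverse.mpr hnd)
    (fun w => by simpa [or_comm] using hmem w)
    (isChain_adj_reverse h₂) (isChain_adj_reverse h₁) (by simpa using hy) (by simpa using hx)
  rw [List.countP_reverse, List.countP_reverse, List.length_reverse] at hl₂
  have hdeg : G.degree x + G.degree y + 2 ≤ Fintype.card V := by
    rw [degree_eq_countP hnd hmem, degree_eq_countP hnd hmem, List.countP_append,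
      List.countP_append]
    lia
  obtain ⟨rfl, rfl⟩ | ⟨rfl, rfl⟩ := Sym2.eq_iff.mp hxy <;> lia

theorem exists_le_maximal_not_traceable [Finite V] {G : SimpleGraph V} (hG : ¬Traceable G) :
    ∃ H, G ≤ H ∧ Maximal (fun K => ¬Traceable K) H :=
  Set.Finite.exists_le_maximal (s := {K : SimpleGraph V | ¬Traceable K}) (Set.toFinite _) hG

theorem exists_ne_not_adj_of_not_traceable [Finite V] [Nonempty V] {G : SimpleGraph V}
    (hG : ¬Traceable G) : ∃ u v, u ≠ v ∧ ¬G.Adj u v := by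
  by_contra! h
  exact hG (traceable_top.mono fun u v huv => h u v huv)

/-- Ore's theorem. -/
theorem traceable_of_le_degree_add_degree [Fintype V] [Nonempty V] {G : SimpleGraph V}
    [DecidableRel G.Adj]
    (hG : ∀ u v, u ≠ v → ¬G.Adj u v → Fintype.card V ≤ G.degree u + G.degree v + 1) :
    Traceable G := by
  classical
  by_contra hnot
  obtain ⟨H, hGH, hH⟩ := exists_le_maximal_not_traceable hnot
  obtain ⟨u, v, hne, huv⟩ := exists_ne_not_adj_of_not_traceable hH.prop
  have hHuv := degree_add_degree_add_two_le hH hne huv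
  have hGuv := hG u v hne fun h => huv (hGH h)
  have := SimpleGraph.degree_le_of_le hGH (v := u)
  have := SimpleGraph.degree_le_of_le hGH (v := v)
  lia

/-- Chvátal's degree condition. -/
theorem exists_card_filter_degree_le [Fintype V] [Nonempty V] {G : SimpleGraph V}
    [DecidableRel G.Adj] (hG : Maximal (fun K => ¬Traceable K) G) :
    ∃ k, 2 * k + 2 ≤ Fintype.card V ∧ k + 1 ≤ #{v | G.degree v ≤ k} ∧
      Fintype.card V ≤ #{v | G.degree v + k + 2 ≤ Fintype.card V} + k := by
  classical
  obtain ⟨⟨u, v⟩, huv, hmax⟩ := Finset.exists_max_image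
    ({p | p.1 ≠ p.2 ∧ ¬G.Adj p.1 p.2} : Finset (V × V)) (fun p => G.degree p.1 + G.degree p.2)
    (by
      obtain ⟨u, v, huv⟩ := exists_ne_not_adj_of_not_traceable hG.prop
      exact ⟨(u, v), by simpa using huv⟩)
  simp only [mem_filter_univ, Prod.forall] at huv hmax
  wlog hle : G.degree u ≤ G.degree v generalizing u v
  · exact this v u ⟨huv.1.symm, fun h => huv.2 h.symm⟩
      (fun a b h => (hmax a b h).trans_eq (add_comm _ _))
      (by lia)
  have hdeg := degree_add_degree_add_two_le hG huv.1 huv.2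
  have hv : (insert v (G.neighborFinset v))ᶜ ⊆ ({w | G.degree w ≤ G.degree u} : Finset V) := by
    intro w hw
    simp only [mem_compl, mem_insert, SimpleGraph.mem_neighborFinset, not_or] at hw
    have := hmax w v ⟨hw.1, fun h => hw.2 h.symm⟩
    simp only [mem_filter_univ]
    lia
  have hu : (G.neighborFinset u)ᶜ ⊆
      ({w | G.degree w + G.degree u + 2 ≤ Fintype.card V} : Finset V) := by
    intro w hw
    simp only [mem_compl, SimpleGraph.mem_neighborFinset] at hw
    simp only [mem_filter_univ]
    by_cases hwu : w = u
    · subst hwu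
      lia
    · have := degree_add_degree_add_two_le hG hwu (fun h => hw h.symm)
      lia
  have hv := card_le_card hv
  have hu := card_le_card hu
  rw [card_compl, G.card_neighborFinset_eq_degree] at hu
  rw [card_compl, card_insert_of_notMem (by simp), G.card_neighborFinset_eq_degree] at hv
  exact ⟨G.degree u, by lia, by lia, by lia⟩

end Ore

section SpectralBounds

theorem sum_ite_mem_const {V : Type*} [DecidableEq V] (s S : Finset V) (a b : ℝ) :
    ∑ u ∈ s, (if u ∈ S then a else b) = a * #s + (b - a) * #(s \ S) := by
  have hcard : (#s : ℝ) = #(s ∩ S) + #(s \ S) := by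
    exact_mod_cast (card_inter_add_card_sdiff s S).symm
  rw [sum_ite, sum_const, sum_const, filter_mem_eq_inter, filter_notMem_eq_sdiff, nsmul_eq_mul,
    nsmul_eq_mul, hcard]
  ring

variable {V : Type*} [Fintype V] [DecidableEq V] {G : SimpleGraph V} [DecidableRel G.Adj]

theorem adjSpecRad_le_of_sum_neighborFinset_le {y : V → ℝ} {N : ℝ} (hN : 0 ≤ N)
    (hy : ∀ v, 0 < y v) (hyN : ∀ v, ∑ u ∈ G.neighborFinset v, y u ≤ N * y v) :
    adjSpecRad G ≤ N := by
  refine Real.sSup_le ?_ hN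
  rintro μ ⟨x, hx, hμ⟩
  obtain ⟨w, hw⟩ := Function.ne_iff.mp hx
  have : Nonempty V := ⟨w⟩
  obtain ⟨v, hv⟩ := Finite.exists_max fun u => |x u| / y u
  have hxv : 0 < |x v| := by
    have := (div_pos (abs_pos.mpr hw) (hy w)).trans_le (hv w)
    exact (div_pos_iff_of_pos_right (hy v)).mp this
  have hle (u : V) : |x u| ≤ |x v| / y v * y u := (div_le_iff₀ (hy u)).mp (hv u)
  refine le_of_mul_le_mul_right ?_ hxv
  calc
    μ * |x v| ≤ |μ * x v| := by rw [abs_mul]; gcongr; exact le_abs_self μ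
    _ = |∑ u ∈ G.neighborFinset v, x u| := by
      rw [← SimpleGraph.adjMatrix_mulVec_apply, hμ, Pi.smul_apply, smul_eq_mul]
    _ ≤ ∑ u ∈ G.neighborFinset v, |x u| := abs_sum_le_sum_abs _ _
    _ ≤ ∑ u ∈ G.neighborFinset v, |x v| / y v * y u := sum_le_sum fun u _ => hle u
    _ = |x v| / y v * ∑ u ∈ G.neighborFinset v, y u := (mul_sum _ _ _).symm
    _ ≤ |x v| / y v * (N * y v) := by
      gcongr
      · exact (div_pos hxv (hy v)).le
      · exact hyN v
    _ = N * |x v| := by field_simp [(hy v).ne']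

theorem adjSpecRad_lt_of_sum_neighborFinset_lt [Nonempty V] {y : V → ℝ} {N : ℝ}
    (hy : ∀ v, 0 < y v) (hyN : ∀ v, ∑ u ∈ G.neighborFinset v, y u < N * y v) :
    adjSpecRad G < N := by
  obtain ⟨v, hv⟩ := Finite.exists_max fun v => (∑ u ∈ G.neighborFinset v, y u) / y v
  refine (adjSpecRad_le_of_sum_neighborFinset_le ?_ hy fun u => ?_).trans_lt
    ((div_lt_iff₀ (hy v)).mpr (hyN v))
  · exact div_nonneg (sum_nonneg fun u _ => (hy u).le) (hy v).le
  · exact (div_le_iff₀ (hy u)).mp (hv u)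

theorem adjSpecRad_lt_of_two_weights [Nonempty V] {S : Finset V} {d e : ℕ} {a b N : ℝ}
    (ha : 0 < a) (hab : a ≤ b) (hdeg : ∀ v ∈ S, G.degree v ≤ d)
    (hout : ∀ v ∈ S, #(G.neighborFinset v \ S) ≤ e) (hS : a * d + (b - a) * e < N * a)
    (hSc : a * Fintype.card V + (b - a) * #Sᶜ < (N + 1) * b) : adjSpecRad G < N := by
  have hb : 0 < b := ha.trans_le hab
  have : 0 ≤ b - a := sub_nonneg.mpr hab
  refine adjSpecRad_lt_of_sum_neighborFinset_lt (y := fun v => if v ∈ S then a else b)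
    (fun v => by split_ifs <;> assumption) fun v => ?_
  split_ifs with hv
  · have : (#(G.neighborFinset v) : ℝ) ≤ d := by exact_mod_cast hdeg v hv
    have : (#(G.neighborFinset v \ S) : ℝ) ≤ e := by exact_mod_cast hout v hv
    rw [sum_ite_mem_const]
    exact lt_of_le_of_lt (by gcongr) hS
  · have hnonneg (u : V) : 0 ≤ if u ∈ S then a else b := by split_ifs <;> positivity
    have hins := sum_le_sum_of_subset_of_nonneg (subset_univ (insert v (G.neighborFinset v)))
      fun u _ _ => hnonneg u
    rw [sum_insert (by simp), if_neg hv, sum_ite_mem_const univ, card_univ, ← compl_eq_univ_sdiff]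
      at hins
    linarith

-- For these weights both inequalities of `adjSpecRad_lt_of_two_weights` become `h`.
theorem adjSpecRad_lt_of_card_le_card_filter_degree {k t : ℕ} (htk : t < k)
    (hcard : Fintype.card V ≤ #{v | G.degree v + k + 2 ≤ Fintype.card V} + k)
    (h : (k * (k + 1) : ℝ) < (k - t) * (Fintype.card V - t - 1)) :
    adjSpecRad G < Fintype.card V - t - 2 := by
  have htk' : (t + 1 : ℝ) ≤ k := by exact_mod_cast htk
  have hkn : k + 2 ≤ Fintype.card V := by
    by_contra! hlt
    have : (Fintype.card V : ℝ) ≤ k + 1 := by exact_mod_cast Nat.lt_succ_iff.mp hlt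
    nlinarith [t.cast_nonneg (α := ℝ)]
  have hkn' : (k + 2 : ℝ) ≤ Fintype.card V := by exact_mod_cast hkn
  have : Nonempty V := Fintype.card_pos_iff.mp (by lia)
  set S : Finset V := {v | G.degree v + k + 2 ≤ Fintype.card V}
  have hSc : #Sᶜ ≤ k := by rw [card_compl]; lia
  have hSc' : (#Sᶜ : ℝ) ≤ k := by exact_mod_cast hSc
  refine adjSpecRad_lt_of_two_weights (S := S) (d := Fintype.card V - (k + 2)) (e := k)
    (a := Fintype.card V - t - 1) (b := Fintype.card V + k - t) (by linarith) (by linarith)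
    (fun v hv => ?_) (fun v _ => (card_le_card ?_).trans hSc) ?_ ?_
  · have := (mem_filter_univ v).mp hv
    lia
  · exact fun u hu => mem_compl.mpr (mem_sdiff.mp hu).2
  · push_cast [Nat.cast_sub hkn]
    linarith
  · nlinarith

theorem adjSpecRad_lt_of_degree_le {t : ℕ} {A : Finset V} (hA : t + 2 ≤ #A)
    (hdeg : ∀ v ∈ A, G.degree v ≤ t) (hn : (t + 1) * (t + 2) < Fintype.card V) :
    adjSpecRad G < Fintype.card V - t - 2 := by
  obtain ⟨a, -⟩ : A.Nonempty := card_pos.mp (by lia)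
  have : Nonempty V := ⟨a⟩
  have hn' : ((t + 1) * (t + 2) : ℝ) < Fintype.card V := by exact_mod_cast hn
  have hAc : (#Aᶜ : ℝ) ≤ Fintype.card V - t - 2 := by
    have : (#A + #Aᶜ : ℝ) = Fintype.card V := by exact_mod_cast card_add_card_compl A
    have : (t + 2 : ℝ) ≤ #A := by exact_mod_cast hA
    linarith
  have : (0 : ℝ) ≤ t := t.cast_nonneg
  refine adjSpecRad_lt_of_two_weights (S := A) (d := t) (e := t) (a := t + 1)
    (b := Fintype.card V) (by positivity) (by nlinarith) hdeg
    (fun v hv => (card_le_card sdiff_subset).trans (hdeg v hv)) (by linarith) ?_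
  have : (Fintype.card V - (t + 1) : ℝ) * #Aᶜ
      ≤ (Fintype.card V - (t + 1)) * (Fintype.card V - t - 2) :=
    mul_le_mul_of_nonneg_left hAc (by nlinarith)
  linarith

end SpectralBounds

section NearCliqueBound

variable {V : Type*} [Fintype V] [DecidableEq V]

/-- A test vector for graphs that have low degrees on `A` and are nearly complete off `A`. Off `A`
it measures the number of neighbours in `A`, on the scale `τ`, and an independent set `P` off `A`
receives a discount `τ`. -/
noncomputable def nearCliqueWeight (G : SimpleGraph V) [DecidableRel G.Adj] (A P : Finset V)
    (τ : ℝ) (v : V) : ℝ :=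
  if v ∈ A then #Aᶜ
  else τ * (#Aᶜ + 1) + #(G.neighborFinset v ∩ A) - if v ∈ P then τ else 0

variable {G : SimpleGraph V} [DecidableRel G.Adj] {A P : Finset V} {τ : ℝ}

theorem nearCliqueWeight_of_mem {v : V} (hv : v ∈ A) : nearCliqueWeight G A P τ v = #Aᶜ :=
  if_pos hv

theorem nearCliqueWeight_of_notMem {v : V} (hv : v ∉ A) :
    nearCliqueWeight G A P τ v
      = τ * (#Aᶜ + 1) + #(G.neighborFinset v ∩ A) - if v ∈ P then τ else 0 :=
  if_neg hv

theorem le_nearCliqueWeight (hτ : 0 ≤ τ) {v : V} (hv : v ∉ A) :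
    τ * #Aᶜ ≤ nearCliqueWeight G A P τ v := by
  have : (0 : ℝ) ≤ #(G.neighborFinset v ∩ A) := Nat.cast_nonneg _
  rw [nearCliqueWeight_of_notMem hv]
  split_ifs <;> linarith

theorem nearCliqueWeight_le (hτ : 1 ≤ τ) (v : V) :
    nearCliqueWeight G A P τ v ≤ τ * (#Aᶜ + 1) + #A := by
  have : (0 : ℝ) ≤ #A := Nat.cast_nonneg _
  have : (0 : ℝ) ≤ #Aᶜ := Nat.cast_nonneg _
  have : (#(G.neighborFinset v ∩ A) : ℝ) ≤ #A := by exact_mod_cast card_le_card inter_subset_right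
  rw [nearCliqueWeight]
  split_ifs <;> nlinarith

theorem nearCliqueWeight_pos (hτ : 0 < τ) (hA : 0 < #Aᶜ) (v : V) :
    0 < nearCliqueWeight G A P τ v := by
  by_cases hv : v ∈ A
  · rw [nearCliqueWeight_of_mem hv]
    exact_mod_cast hA
  · exact lt_of_lt_of_le (by positivity) (le_nearCliqueWeight hτ.le hv)

theorem sum_compl_card_neighborFinset_inter_le {d : ℕ} (hdeg : ∀ v ∈ A, G.degree v ≤ d) :
    ∑ v ∈ Aᶜ, #(G.neighborFinset v ∩ A) ≤ d * #A := by
  have hcount := sum_card_bipartiteAbove_eq_sum_card_bipartiteBelow G.Adj (s := Aᶜ) (t := A)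
  calc
    ∑ v ∈ Aᶜ, #(G.neighborFinset v ∩ A) = ∑ v ∈ Aᶜ, #(A.bipartiteAbove G.Adj v) := by
      congr! 2 with v
      ext u
      simp [and_comm]
    _ = ∑ a ∈ A, #(Aᶜ.bipartiteBelow G.Adj a) := hcount
    _ ≤ ∑ _a ∈ A, d := sum_le_sum fun a ha => (card_le_card fun u hu => by
      simpa [SimpleGraph.adj_comm] using (mem_filter.mp hu).2).trans (hdeg a ha)
    _ = d * #A := by rw [sum_const, smul_eq_mul, mul_comm]

theorem sum_compl_nearCliqueWeight_le {d : ℕ} (hdeg : ∀ v ∈ A, G.degree v ≤ d) (hP : P ⊆ Aᶜ) :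
    ∑ v ∈ Aᶜ, nearCliqueWeight G A P τ v ≤ #Aᶜ * (τ * (#Aᶜ + 1)) + d * #A - τ * #P := by
  have hsum : (∑ v ∈ Aᶜ, #(G.neighborFinset v ∩ A) : ℝ) ≤ d * #A := by
    exact_mod_cast sum_compl_card_neighborFinset_inter_le hdeg
  rw [sum_congr rfl fun v hv => nearCliqueWeight_of_notMem (mem_compl.mp hv),
    sum_sub_distrib, sum_add_distrib, sum_const, sum_ite_mem,
    inter_eq_right.mpr hP, sum_const, nsmul_eq_mul, nsmul_eq_mul]
  linarith

theorem sum_neighborFinset_add_sum_nearCliqueWeight_le (hτ : 0 ≤ τ) {v : V} {B : Finset V}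
    (hB : B ⊆ Aᶜ) (hvB : Disjoint B (G.neighborFinset v)) :
    ∑ u ∈ G.neighborFinset v, nearCliqueWeight G A P τ u + ∑ u ∈ B, nearCliqueWeight G A P τ u
      ≤ #(G.neighborFinset v ∩ A) * #Aᶜ + ∑ u ∈ Aᶜ, nearCliqueWeight G A P τ u := by
  have hinter : ∑ u ∈ G.neighborFinset v ∩ A, nearCliqueWeight G A P τ u
      = #(G.neighborFinset v ∩ A) * #Aᶜ := by
    rw [sum_congr rfl fun u hu => nearCliqueWeight_of_mem (mem_inter.mp hu).2, sum_const,
      nsmul_eq_mul]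
  have hsdiff : ∑ u ∈ (G.neighborFinset v \ A) ∪ B, nearCliqueWeight G A P τ u
      ≤ ∑ u ∈ Aᶜ, nearCliqueWeight G A P τ u := by
    refine sum_le_sum_of_subset_of_nonneg (union_subset (fun u hu => ?_) hB) fun u hu _ => ?_
    · exact mem_compl.mpr (mem_sdiff.mp hu).2
    · exact le_trans (by positivity) (le_nearCliqueWeight hτ (mem_compl.mp hu))
  rw [sum_union (hvB.symm.mono_left sdiff_subset)] at hsdiff
  rw [← sum_inter_add_sum_sdiff _ A, hinter]
  linarith

theorem sum_neighborFinset_nearCliqueWeight_lt_of_mem {d : ℕ} (hdeg : ∀ v ∈ A, G.degree v ≤ d)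
    (hPA : P ⊆ Aᶜ) (hP : G.IsIndepSet P) (hP2 : 2 ≤ #P) (hτ : 0 ≤ τ) (hPτ : d * #A < τ * #P)
    {v : V} (hv : v ∈ P) :
    ∑ u ∈ G.neighborFinset v, nearCliqueWeight G A P τ u
      < (#Aᶜ - 1) * nearCliqueWeight G A P τ v := by
  have hP2' : (2 : ℝ) ≤ #P := by exact_mod_cast hP2
  have hothers : τ * #Aᶜ ≤ ∑ u ∈ P.erase v, nearCliqueWeight G A P τ u := by
    have := card_nsmul_le_sum (P.erase v) (nearCliqueWeight G A P τ) (τ * #Aᶜ) fun u hu =>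
      le_nearCliqueWeight (G := G) hτ (mem_compl.mp (hPA (mem_of_mem_erase hu)))
    rw [nsmul_eq_mul, card_erase_of_mem hv, Nat.cast_pred (by lia)] at this
    exact (le_mul_of_one_le_left (by positivity) (by linarith)).trans this
  have hdisj : Disjoint P (G.neighborFinset v) := disjoint_left.mpr fun u hu hvu =>
    have hvu : G.Adj v u := by simpa using hvu
    hP hv hu hvu.ne hvu
  have hsum := sum_neighborFinset_add_sum_nearCliqueWeight_le (P := P) hτ hPA hdisj
  have htotal := sum_compl_nearCliqueWeight_le (τ := τ) hdeg hPA
  have hvA : v ∉ A := mem_compl.mp (hPA hv)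
  rw [← add_sum_erase P _ hv, nearCliqueWeight_of_notMem hvA, if_pos hv] at hsum
  rw [nearCliqueWeight_of_notMem hvA, if_pos hv]
  linarith

theorem sum_neighborFinset_nearCliqueWeight_lt_of_notMem {d : ℕ}
    (hdeg : ∀ v ∈ A, G.degree v ≤ d) (hPA : P ⊆ Aᶜ) (hτ : 0 ≤ τ) (hPτ : d * #A < τ * #P)
    {v : V} (hvA : v ∉ A) (hvP : v ∉ P) :
    ∑ u ∈ G.neighborFinset v, nearCliqueWeight G A P τ u
      < (#Aᶜ - 1) * nearCliqueWeight G A P τ v := by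
  have hsum := sum_neighborFinset_add_sum_nearCliqueWeight_le (G := G) (P := P) hτ
    (B := {v}) (by simpa using hvA) (v := v) (by simp)
  have htotal := sum_compl_nearCliqueWeight_le (τ := τ) hdeg hPA
  rw [sum_singleton, nearCliqueWeight_of_notMem hvA, if_neg hvP] at hsum
  rw [nearCliqueWeight_of_notMem hvA, if_neg hvP]
  linarith

theorem adjSpecRad_lt_card_compl_sub_one {d : ℕ} (hdeg : ∀ v ∈ A, G.degree v ≤ d)
    (hPA : P ⊆ Aᶜ) (hP : G.IsIndepSet P) (hP2 : 2 ≤ #P) (hτ : 1 ≤ τ) (hPτ : d * #A < τ * #P)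
    (hA : d * (τ * (#Aᶜ + 1) + #A) < ((#Aᶜ : ℝ) - 1) * #Aᶜ) :
    adjSpecRad G < #Aᶜ - 1 := by
  have hτ0 : 0 < τ := zero_lt_one.trans_le hτ
  obtain ⟨p, hp⟩ : P.Nonempty := card_pos.mp (by lia)
  have : Nonempty V := ⟨p⟩
  refine adjSpecRad_lt_of_sum_neighborFinset_lt
    (nearCliqueWeight_pos (G := G) (P := P) hτ0 (card_pos.mpr ⟨p, hPA hp⟩)) fun v => ?_
  by_cases hvA : v ∈ A
  · have hdv : (G.degree v : ℝ) ≤ d := by exact_mod_cast hdeg v hvA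
    rw [nearCliqueWeight_of_mem hvA]
    calc
      ∑ u ∈ G.neighborFinset v, nearCliqueWeight G A P τ u
        ≤ G.degree v * (τ * (#Aᶜ + 1) + #A) := by
          rw [← G.card_neighborFinset_eq_degree, ← nsmul_eq_mul]
          exact sum_le_card_nsmul _ _ _ fun u _ => nearCliqueWeight_le hτ u
      _ ≤ d * (τ * (#Aᶜ + 1) + #A) := by gcongr
      _ < (#Aᶜ - 1) * #Aᶜ := hA
  · by_cases hvP : v ∈ P
    · exact sum_neighborFinset_nearCliqueWeight_lt_of_mem hdeg hPA hP hP2 hτ0.le hPτ hvP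
    · exact sum_neighborFinset_nearCliqueWeight_lt_of_notMem hdeg hPA hτ0.le hPτ hvA hvP

end NearCliqueBound

section Isomorphism

theorem card_fiber_decide_mem {V : Type*} [Fintype V] [DecidableEq V] {A T : Finset V}
    (hAT : Disjoint A T) (c : Bool × Bool) :
    Fintype.card {v // (decide (v ∈ A), decide (v ∈ T)) = c} =
      bif c.1 then bif c.2 then 0 else #A else bif c.2 then #T else Fintype.card V - (#A + #T) := by
  have hT (v : V) : v ∈ A → v ∉ T := fun h => disjoint_left.mp hAT h
  rw [Fintype.card_subtype, ← card_union_of_disjoint hAT, ← card_compl, ← card_empty (α := V)]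
  obtain ⟨_ | _, _ | _⟩ := c <;> simp only [cond_true, cond_false] <;> congr 1 <;> ext v <;>
    simp only [mem_filter_univ, Prod.mk.injEq, decide_eq_true_eq, decide_eq_false_iff_not,
      mem_compl, mem_union, notMem_empty] <;>
    grind

theorem exists_equiv_mem_iff {V W : Type*} [Fintype V] [Fintype W]
    (hVW : Fintype.card V = Fintype.card W) {A T : Finset V} {B S : Finset W} (hAT : Disjoint A T)
    (hBS : Disjoint B S) (hAB : #A = #B) (hTS : #T = #S) :
    ∃ e : V ≃ W, ∀ x, (e x ∈ B ↔ x ∈ A) ∧ (e x ∈ S ↔ x ∈ T) := by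
  classical
  have hfiber (c : Bool × Bool) : Fintype.card {x // (decide (x ∈ A), decide (x ∈ T)) = c}
      = Fintype.card {y // (decide (y ∈ B), decide (y ∈ S)) = c} := by
    rw [card_fiber_decide_mem hAT, card_fiber_decide_mem hBS, hVW, hAB, hTS]
  refine ⟨Equiv.ofFiberEquiv fun c => Fintype.equivOfCardEq (hfiber c), fun x => ?_⟩
  have := Equiv.ofFiberEquiv_map (fun c => Fintype.equivOfCardEq (hfiber c)) x
  simp only [Prod.mk.injEq, decide_eq_decide] at this
  exact this

variable {V : Type*} [Fintype V] {G : SimpleGraph V} {A T : Finset V} {t n : ℕ}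

theorem nonempty_iso_unionKK (hV : Fintype.card V = n) (hA : #A = t + 1)
    (hclique : G.IsClique (A : Set V)ᶜ) (hadj : ∀ a ∈ A, ∀ b, G.Adj a b ↔ a ≠ b ∧ b ∈ A) :
    Nonempty (G ≃g unionKK n t) := by
  classical
  have hn : t + 1 ≤ n := hA ▸ hV ▸ card_le_univ A
  obtain ⟨e, he⟩ := exists_equiv_mem_iff (V := V) (W := Fin n) (by simpa using hV)
    (B := {i : Fin n | (i : ℕ) < t + 1}) (disjoint_empty_right A) (disjoint_empty_right _)
    (by rw [Fin.card_filter_val_lt, hA, min_eq_right hn]) rfl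
  have heA (x : V) : (e x : ℕ) < t + 1 ↔ x ∈ A := by simpa using (he x).1
  refine ⟨⟨e, fun {a b} => ?_⟩⟩
  change (e a ≠ e b ∧ (((e a : ℕ) < t + 1 ∧ (e b : ℕ) < t + 1) ∨
    (t + 1 ≤ (e a : ℕ) ∧ t + 1 ≤ (e b : ℕ)))) ↔ _
  rw [← not_lt, ← not_lt, heA, heA, e.injective.ne_iff]
  by_cases ha : a ∈ A
  · rw [hadj a ha]
    tauto
  by_cases hb : b ∈ A
  · rw [G.adj_comm, hadj b hb]
    tauto
  · have : a ≠ b → G.Adj a b := hclique (by simpa using ha) (by simpa using hb)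
    have : G.Adj a b → a ≠ b := SimpleGraph.Adj.ne
    tauto

theorem nonempty_iso_Bgraph (hV : Fintype.card V = n) (hA : #A = t + 1) (hT : #T = t)
    (hAT : Disjoint A T) (hclique : G.IsClique (A : Set V)ᶜ)
    (hadj : ∀ a ∈ A, ∀ b, G.Adj a b ↔ b ∈ T) : Nonempty (G ≃g Bgraph n 1 t) := by
  classical
  have hn : t + 1 + t ≤ n := by
    have := card_le_univ (A ∪ T)
    rwa [card_union_of_disjoint hAT, hA, hT, hV] at this
  obtain ⟨e, he⟩ := exists_equiv_mem_iff (V := V) (W := Fin n) (by simpa using hV)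
    (B := ({i : Fin n | (i : ℕ) < n - (t + 1)} : Finset (Fin n))ᶜ)
    (S := {i : Fin n | (i : ℕ) < t}) hAT (disjoint_left.mpr fun x => by simp; lia)
    (by rw [card_compl, Fin.card_filter_val_lt, hA, Fintype.card_fin]; lia)
    (by rw [Fin.card_filter_val_lt, hT]; lia)
  have heA (x : V) : (e x : ℕ) < n - (t + 1) ↔ x ∉ A := by
    rw [← (he x).1, mem_compl, mem_filter_univ, not_not]
  have heT (x : V) : (e x : ℕ) < t ↔ x ∈ T := by simpa using (he x).2
  have hTA (x : V) : x ∈ T → x ∉ A := fun hxT hxA => disjoint_left.mp hAT hxA hxT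
  refine ⟨⟨e, fun {a b} => ?_⟩⟩
  change (e a ≠ e b ∧ ((e a : ℕ) < t ∨ (e b : ℕ) < t ∨
    ((e a : ℕ) < n - (t + 1) ∧ (e b : ℕ) < n - (t + 1)))) ↔ _
  rw [heA, heA, heT, heT, e.injective.ne_iff]
  have := hTA a
  have := hTA b
  by_cases ha : a ∈ A
  · rw [hadj a ha]
    have : a = b → b ∈ A := fun h => h ▸ ha
    tauto
  by_cases hb : b ∈ A
  · rw [G.adj_comm, hadj b hb]
    have : a = b → a ∈ A := fun h => h ▸ hb
    tauto
  · have : a ≠ b → G.Adj a b := hclique (by simpa using ha) (by simpa using hb)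
    have : G.Adj a b → a ≠ b := SimpleGraph.Adj.ne
    tauto

end Isomorphism

section CliqueOffSet

variable {V : Type*} {G : SimpleGraph V} {A T : Finset V}

theorem adj_of_mem_common_neighbors (hclique : G.IsClique (A : Set V)ᶜ) (hAT : Disjoint A T)
    (hadj : ∀ a ∈ A, ∀ b ∉ A, (G.Adj a b ↔ b ∈ T)) {u z : V} (hz : z ∈ T) (huz : u ≠ z) :
    G.Adj u z := by
  have hzA : z ∉ A := disjoint_right.mp hAT hz
  by_cases hu : u ∈ A
  · exact (hadj u hu z hzA).mpr hz
  · exact hclique (by simpa using hu) (by simpa using hzA) huz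

theorem traceable_of_traceable_induce [Finite V] {S : Finset V} {z : V}
    (hzS : ∀ v ∈ S, G.Adj v z) (hS : Traceable (G.induce (S : Set V)))
    (hclique : G.IsClique (S : Set V)ᶜ) : Traceable G := by
  classical
  cases nonempty_fintype V
  have : Nonempty V := ⟨z⟩
  have hz : z ∉ S := fun h => (hzS z h).ne rfl
  obtain ⟨u, v, p, hp, hmem⟩ := hS
  have hpS (w : V) : w ∈ p.support.map Subtype.val ↔ w ∈ S := by
    simpa using ⟨fun ⟨hw, _⟩ => hw, fun hw => ⟨hw, hmem ⟨w, hw⟩⟩⟩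
  have hpnd : (p.support.map Subtype.val).Nodup := hp.support_nodup.map Subtype.val_injective
  have hpchain : (p.support.map Subtype.val).IsChain G.Adj :=
    List.isChain_map_of_isChain Subtype.val (fun _ _ h => h) p.isChain_adj_support
  set r := z :: (insert z S)ᶜ.toList with hr
  have hrS (w : V) : w ∈ r ↔ w ∉ S := by
    by_cases hw : w = z <;> simp [hr, hw, hz]
  have hrnd : r.Nodup := by simp [hr, nodup_toList]
  have hrchain : r.IsChain G.Adj :=
    isChain_of_isClique hclique hrnd fun w hw => by simpa using (hrS w).mp hw
  refine traceable_iff_exists_list.mpr ⟨p.support.map Subtype.val ++ r, ?_, ?_, fun w => ?_⟩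
  · exact hpnd.append hrnd fun w hw hwr => (hrS w).mp hwr ((hpS w).mp hw)
  · refine isChain_append_of_rel (u := v) (v := z) hpchain hrchain ?_ (by simp [hr]) (hzS v v.2)
    rw [List.getLast?_map, List.getLast?_eq_getLast_of_ne_nil p.support_ne_nil, p.getLast_support]
    rfl
  · rw [List.mem_append, hpS, hrS]
    exact em _

variable [Fintype V] [DecidableRel G.Adj]

theorem eq_of_le_of_isClique_compl {H : SimpleGraph V} [DecidableRel H.Adj] (hGH : G ≤ H)
    (hclique : G.IsClique (A : Set V)ᶜ) (hdeg : ∀ v ∈ A, H.degree v ≤ G.degree v) : G = H := by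
  have adj_of_mem {u v : V} (hu : u ∈ A) (huv : H.Adj u v) : G.Adj u v := by
    have hsub : G.neighborFinset u ⊆ H.neighborFinset u := fun w hw => by
      simpa using hGH (by simpa using hw)
    have heq := eq_of_subset_of_card_le hsub (by simpa using hdeg u hu)
    rwa [← G.mem_neighborFinset, heq, H.mem_neighborFinset]
  refine le_antisymm hGH fun u v huv => ?_
  by_cases hu : u ∈ A
  · exact adj_of_mem hu huv
  by_cases hv : v ∈ A
  · exact (adj_of_mem hv huv.symm).symm
  · exact hclique (by simpa using hu) (by simpa using hv) huv.ne

theorem adj_of_maximal_not_traceable (hG : Maximal (fun K => ¬Traceable K) G)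
    (hclique : G.IsClique (A : Set V)ᶜ) {a b w : V} (ha : a ∈ A) (hb : #A ≤ G.degree b + 1)
    (hbA : b ∈ A) (hw : w ∉ A) (haw : G.Adj a w) : G.Adj b w := by
  classical
  by_contra hbw
  have hdeg := degree_add_degree_add_two_le hG (ne_of_mem_of_not_mem hbA hw) hbw
  have hsub : insert a (Aᶜ.erase w) ⊆ G.neighborFinset w := by
    refine insert_subset (by simpa using haw.symm) fun v hv => ?_
    obtain ⟨hvw, hvA⟩ := mem_erase.mp hv
    rw [G.mem_neighborFinset]
    exact hclique (by simpa using hw) (by simpa using hvA) hvw.symm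
  have hcard := card_le_card hsub
  rw [card_insert_of_notMem (by simp [ha]), card_erase_of_mem (by simpa using hw),
    G.card_neighborFinset_eq_degree] at hcard
  have := card_add_card_compl A
  lia

theorem exists_common_neighbors (hG : Maximal (fun K => ¬Traceable K) G)
    (hclique : G.IsClique (A : Set V)ᶜ) (hdeg : ∀ a ∈ A, #A ≤ G.degree a + 1) :
    ∃ T, Disjoint A T ∧ ∀ a ∈ A, ∀ b ∉ A, (G.Adj a b ↔ b ∈ T) := by
  classical
  refine ⟨{w ∈ Aᶜ | ∃ a ∈ A, G.Adj a w}, ?_, fun a ha w hw => ?_⟩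
  · exact disjoint_compl_right.mono_right (filter_subset _ _)
  · simp only [mem_filter, mem_compl, hw, not_false_eq_true, true_and]
    exact ⟨fun haw => ⟨a, ha, haw⟩, fun ⟨b, hb, hbw⟩ =>
      adj_of_maximal_not_traceable hG hclique hb (hdeg a ha) ha hw hbw⟩

theorem degree_le_degree_induce_add_one [DecidableEq V] {S : Finset V} {z : V} {v : (S : Set V)}
    (hv : G.neighborFinset v ⊆ insert z S) :
    G.degree v ≤ (G.induce (S : Set V)).degree v + 1 := by
  have hinduce : (G.induce (S : Set V)).degree v = #(G.neighborFinset v ∩ S) := by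
    rw [← SimpleGraph.card_neighborFinset_eq_degree, ← card_map (.subtype (· ∈ (S : Set V)))]
    congr 1
    ext w
    simp
  rw [hinduce, ← G.card_neighborFinset_eq_degree]
  refine (card_le_card fun w hw => ?_).trans (card_insert_le z _)
  have := hv hw
  grind

theorem traceable_of_common_neighbors (hclique : G.IsClique (A : Set V)ᶜ) (hA : A.Nonempty)
    (hT : T.Nonempty) (hAT : Disjoint A T) (hadj : ∀ a ∈ A, ∀ b ∉ A, (G.Adj a b ↔ b ∈ T))
    (hdeg : ∀ a ∈ A, #A + #T ≤ 2 * G.degree a) : Traceable G := by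
  classical
  obtain ⟨a, ha⟩ := hA
  obtain ⟨z, hz⟩ := hT
  have adj_of_mem {u w : V} (hw : w ∈ T) (huw : u ≠ w) : G.Adj u w :=
    adj_of_mem_common_neighbors hclique hAT hadj hw huw
  set S := A ∪ T.erase z with hS
  have hzS : z ∉ S := by simp [hS, disjoint_right.mp hAT hz]
  have hcardS : Fintype.card (S : Set V) + 1 = #A + #T := by
    rw [← Set.toFinset_card, toFinset_coe, hS,
      card_union_of_disjoint (hAT.mono_right (erase_subset z T)), add_assoc, card_erase_add_one hz]
  have hsub (b : V) (hb : b ∈ A) : G.neighborFinset b ⊆ insert z S := fun c hbc => by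
    have := hadj b hb c
    simp only [G.mem_neighborFinset] at hbc
    simp only [hS, mem_insert, mem_union, mem_erase]
    tauto
  have mem_of_not_adj {u w : (S : Set V)} (huw : u ≠ w) (hnadj : ¬G.Adj u w) : (w : V) ∈ A := by
    by_contra hw
    have hwT : (w : V) ∈ T := mem_of_mem_erase ((mem_union.mp w.2).resolve_left hw)
    exact hnadj (adj_of_mem hwT (Subtype.coe_ne_coe.mpr huw))
  refine traceable_of_traceable_induce
    (fun u hu => adj_of_mem hz (ne_of_mem_of_not_mem hu hzS)) ?_
    (hclique.subset (Set.compl_subset_compl.mpr (coe_subset.mpr subset_union_left)))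
  have : Nonempty (S : Set V) := ⟨⟨a, mem_union_left _ ha⟩⟩
  refine traceable_of_le_degree_add_degree fun u w huw hnadj => ?_
  have hw := mem_of_not_adj huw hnadj
  have hu := mem_of_not_adj huw.symm fun h => hnadj h.symm
  have := degree_le_degree_induce_add_one (hsub u hu)
  have := degree_le_degree_induce_add_one (hsub w hw)
  have := hdeg u hu
  have := hdeg w hw
  lia

theorem nonempty_iso_of_maximal_not_traceable {t n : ℕ} (hV : Fintype.card V = n)
    (hG : Maximal (fun K => ¬Traceable K) G) (hA : #A = t + 1)
    (hdeg : ∀ v ∈ A, G.degree v = t) (hclique : G.IsClique (A : Set V)ᶜ) :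
    Nonempty (G ≃g unionKK n t) ∨ Nonempty (G ≃g Bgraph n 1 t) := by
  classical
  obtain ⟨T, hAT, hadj⟩ := exists_common_neighbors hG hclique fun a ha => by rw [hA, hdeg a ha]
  obtain rfl | hT := T.eq_empty_or_nonempty
  · refine .inl (nonempty_iso_unionKK hV hA hclique fun a ha b => ?_)
    have hsub : G.neighborFinset a ⊆ A.erase a := fun b hab => by
      rw [G.mem_neighborFinset] at hab
      have hbA : b ∈ A := by
        by_contra hb
        exact notMem_empty b ((hadj a ha b hb).mp hab)
      exact mem_erase.mpr ⟨hab.ne', hbA⟩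
    have heq := eq_of_subset_of_card_le hsub (by simp [card_erase_of_mem ha, hA, hdeg a ha])
    rw [← G.mem_neighborFinset, heq, mem_erase, ne_comm]
  · have htT : t ≤ #T := by
      by_contra! hlt
      exact hG.prop (traceable_of_common_neighbors hclique (card_pos.mp (by lia)) hT hAT hadj
        fun a ha => by rw [hdeg a ha]; lia)
    have heq (a : V) (ha : a ∈ A) : T = G.neighborFinset a := by
      refine eq_of_subset_of_card_le (fun b hb => ?_) (by simpa [hdeg a ha] using htT)
      exact (G.mem_neighborFinset a b).mpr ((hadj a ha b (disjoint_right.mp hAT hb)).mpr hb)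
    obtain ⟨a, ha⟩ : A.Nonempty := card_pos.mp (by lia)
    have hTcard : #T = t := by rw [heq a ha, G.card_neighborFinset_eq_degree, hdeg a ha]
    exact .inr (nonempty_iso_Bgraph hV hA hTcard hAT hclique fun b hb c => by
      rw [heq b hb, G.mem_neighborFinset])

end CliqueOffSet

section Stability

theorem mul_add_one_lt_sub_mul {t k n : ℕ} (htk : t < k) (hkn : 2 * k + 2 ≤ n)
    (hn : t ^ 2 + 4 * t + 4 ≤ n) : (k * (k + 1) : ℝ) < (k - t) * (n - t - 1) := by
  obtain ⟨j, rfl⟩ := Nat.exists_eq_add_of_lt htk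
  have hj : (0 : ℝ) ≤ j := j.cast_nonneg
  have : (0 : ℝ) ≤ t := t.cast_nonneg
  have hkn' : (2 * (t + j + 1) + 2 : ℝ) ≤ n := by exact_mod_cast hkn
  have hn' : (t ^ 2 + 4 * t + 4 : ℝ) ≤ n := by exact_mod_cast hn
  push_cast
  rcases le_or_gt (2 * j : ℝ) (t ^ 2 + 2 * t) with hjt | hjt
  · nlinarith [mul_le_mul_of_nonneg_left hn' (by positivity : (0 : ℝ) ≤ j + 1),
      mul_nonneg hj (by nlinarith : (0 : ℝ) ≤ t ^ 2 + t - j)]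
  · nlinarith [mul_le_mul_of_nonneg_left hkn' (by positivity : (0 : ℝ) ≤ j + 1),
      mul_nonneg hj (by nlinarith : (0 : ℝ) ≤ j - t)]

variable {V : Type*} [Fintype V] [DecidableEq V] {G : SimpleGraph V} [DecidableRel G.Adj] {t : ℕ}

theorem lt_card_filter_degree_le {H : SimpleGraph V} [DecidableRel H.Adj] (hGH : G ≤ H)
    (hH : Maximal (fun K => ¬Traceable K) H)
    (hcard : t ^ 2 + 4 * t + 4 ≤ Fintype.card V) (hmin : ∀ v, t ≤ G.degree v)
    (hl : (Fintype.card V : ℝ) - t - 2 ≤ adjSpecRad G) : t < #{v | H.degree v ≤ t} := by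
  have : Nonempty V := Fintype.card_pos_iff.mp (by lia)
  obtain ⟨k, hk, hlow, hhigh⟩ := exists_card_filter_degree_le hH
  have hkt : k ≤ t := by
    by_contra! htk
    refine hl.not_gt (adjSpecRad_lt_of_card_le_card_filter_degree htk (hhigh.trans ?_)
      (mul_add_one_lt_sub_mul htk hk hcard))
    gcongr with v
    exact SimpleGraph.degree_le_of_le hGH
  obtain ⟨v, hv⟩ : ({v | H.degree v ≤ k} : Finset V).Nonempty := card_pos.mp (by lia)
  have htk : t ≤ k := (hmin v).trans
    ((SimpleGraph.degree_le_of_le hGH).trans ((mem_filter_univ v).mp hv))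
  rw [← le_antisymm hkt htk]
  exact hlow

theorem isClique_compl_of_le_adjSpecRad {A : Finset V} (hA : #A = t + 1)
    (hdeg : ∀ v ∈ A, G.degree v ≤ t)
    (hcard : t ^ 3 + t ^ 2 + 4 * t + 7 ≤ 2 * Fintype.card V)
    (hl : (Fintype.card V : ℝ) - t - 2 ≤ adjSpecRad G) : G.IsClique (A : Set V)ᶜ := by
  intro u hu v hv huv
  by_contra hnadj
  have hcard' : (t ^ 3 + t ^ 2 + 4 * t + 7 : ℝ) ≤ 2 * Fintype.card V := by exact_mod_cast hcard
  have hAc : (Fintype.card V : ℝ) = #Aᶜ + t + 1 := by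
    rw [← card_add_card_compl A, hA]
    push_cast
    ring
  have ht : (0 : ℝ) ≤ t := t.cast_nonneg
  -- `τ` has to exceed `t * (t + 1) / 2`, but by little enough for the cubic bound on the order.
  refine (adjSpecRad_lt_card_compl_sub_one (P := {u, v}) (τ := (t ^ 2 + t + 2) / 2)
    hdeg ?_ ?_ ?_ ?_ ?_ ?_).not_ge (by linarith)
  · simpa [insert_subset_iff] using ⟨hu, hv⟩
  · simpa [SimpleGraph.isIndepSet_iff, Set.pairwise_insert, G.adj_comm v u] using fun _ => hnadj
  · rw [card_pair huv]
  · nlinarith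
  · rw [hA, card_pair huv]
    push_cast
    linarith
  · rw [hA]
    push_cast
    nlinarith [mul_nonneg ht (sq_nonneg (t - 2 : ℝ)), sq_nonneg (t - 3 : ℝ)]

theorem maximal_not_traceable_and_exists_isClique_compl
    (hcard₂ : t ^ 2 + 4 * t + 4 ≤ Fintype.card V)
    (hcard₃ : t ^ 3 + t ^ 2 + 4 * t + 7 ≤ 2 * Fintype.card V) (hmin : ∀ v, t ≤ G.degree v)
    (hl : (Fintype.card V : ℝ) - t - 2 ≤ adjSpecRad G) (hG : ¬Traceable G) :
    Maximal (fun K => ¬Traceable K) G ∧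
      ∃ A : Finset V, #A = t + 1 ∧ (∀ v ∈ A, G.degree v = t) ∧ G.IsClique (A : Set V)ᶜ := by
  classical
  have : Nonempty V := Fintype.card_pos_iff.mp (by lia)
  obtain ⟨H, hGH, hH⟩ := exists_le_maximal_not_traceable hG
  have hHcard := lt_card_filter_degree_le hGH hH hcard₂ hmin hl
  set A : Finset V := {v | H.degree v ≤ t}
  have hHdeg (v : V) (hv : v ∈ A) : H.degree v ≤ t := (mem_filter_univ v).mp hv
  have hGdeg (v : V) (hv : v ∈ A) : G.degree v = t :=
    le_antisymm ((SimpleGraph.degree_le_of_le hGH).trans (hHdeg v hv)) (hmin v)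
  have hAcard : #A = t + 1 := by
    refine le_antisymm ?_ hHcard
    by_contra! hlt
    exact hl.not_gt (adjSpecRad_lt_of_degree_le hlt (fun v hv => (hGdeg v hv).le) (by nlinarith))
  have hclique := isClique_compl_of_le_adjSpecRad hAcard (fun v hv => (hGdeg v hv).le) hcard₃ hl
  have hGHeq : G = H :=
    eq_of_le_of_isClique_compl hGH hclique fun v hv => (hHdeg v hv).trans (hmin v)
  exact ⟨hGHeq ▸ hH, A, hAcard, hGdeg, hclique⟩

end Stability

theorem specRad_traceable_Nikiforov_general {V : Type*} [Fintype V] [DecidableEq V] {t n : ℕ}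
    (hV : Fintype.card V = n) (hn₂ : t ^ 2 + 4 * t + 4 ≤ n)
    (hn₃ : t ^ 3 + t ^ 2 + 4 * t + 7 ≤ 2 * n) {G : SimpleGraph V} [DecidableRel G.Adj]
    (hmin : ∀ v, t ≤ G.degree v) (hl : (n : ℝ) - t - 2 ≤ adjSpecRad G) :
    Traceable G ∨ Nonempty (G ≃g unionKK n t) ∨ Nonempty (G ≃g Bgraph n 1 t) := by
  refine or_iff_not_imp_left.mpr fun hG => ?_
  subst hV
  obtain ⟨hmax, A, hA, hdeg, hclique⟩ :=
    maximal_not_traceable_and_exists_isClique_compl hn₂ hn₃ hmin hl hG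
  exact nonempty_iso_of_maximal_not_traceable rfl hmax hA hdeg hclique

/-- **Theorem 1.2** (Nikiforov): spectral radius condition for traceability with minimum
degree at least `t`.  Note that `K_t ∨ (K_{n-2t-1} ∪ (t+1)K₁) = B(n,1,t)`. -/
theorem specRad_traceable_Nikiforov (t n : ℕ) (ht : 1 ≤ t)
    (hn : t ^ 3 + t ^ 2 + 2 * t + 5 ≤ n)
    (G : SimpleGraph (Fin n)) [DecidableRel G.Adj]
    (hmin : ∀ v, t ≤ G.degree v)
    (hl : (n : ℝ) - t - 2 ≤ adjSpecRad G) :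
    Traceable G ∨ Nonempty (G ≃g unionKK n t) ∨ Nonempty (G ≃g Bgraph n 1 t) :=
  specRad_traceable_Nikiforov_general (Fintype.card_fin n) (by nlinarith) (by nlinarith)
    hmin hl
end

section
/- Let k ≥ 1 and δ ≥ 2 be integers and let n be such that n − 2δ − k ≥ 1. For every graph G in the family 𝓑₂(n,k,δ), the Q-index satisfies q(G) > 2(n − k − δ − 1) − 1. -/
open Finset Matrix

/-!
The Q-index is at least the Rayleigh quotient of any test vector `x`, and
`xᵀQx = ∑ (x i + x j) ^ 2` over the edges `ij`. Take `S = Y ∪ Z` and `u = |S| - 1`, and let `x` be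
`u` on `S` and `1` off `S`. Each edge deleted from the clique `S` lowers `xᵀQx` by `4u²`, in total
by at most `u²(δ(δ + k) + 4)`. The `δ(δ + k)` edges between `Y` and the independent part contribute
`(u + 1)²` each, which makes up for this loss, and enough is left to keep the Rayleigh quotient
above `2|S| - 3`.
-/

section Rayleigh

variable {V W : Type*} [Fintype V] [DecidableEq V] [Fintype W] [DecidableEq W]

theorem dotProduct_mulVec_le_sSup_spectrum_mul {A : Matrix V V ℝ} (hA : A.IsHermitian)
    (x : V → ℝ) : x ⬝ᵥ A *ᵥ x ≤ sSup (spectrum ℝ A) * (x ⬝ᵥ x) := by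
  set q := sSup (spectrum ℝ A)
  have spectrum_le {μ : ℝ} (hμ : μ ∈ spectrum ℝ A) : μ ≤ q :=
    le_csSup A.finite_real_spectrum.bddAbove hμ
  have posSemidef_sub : (algebraMap ℝ (Matrix V V ℝ) q - A).PosSemidef := by
    refine Matrix.posSemidef_iff_isHermitian_and_spectrum_nonneg.2 ⟨?_, ?_⟩
    · rw [Matrix.algebraMap_eq_diagonal]
      exact (Matrix.isHermitian_diagonal _).sub hA
    · rw [← spectrum.singleton_sub_eq, Set.singleton_sub]
      rintro _ ⟨μ, hμ, rfl⟩
      exact sub_nonneg.2 (spectrum_le hμ)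
  have := posSemidef_sub.dotProduct_mulVec_nonneg x
  rwa [star_trivial, Algebra.algebraMap_eq_smul_one, Matrix.sub_mulVec, Matrix.smul_mulVec,
    Matrix.one_mulVec, dotProduct_sub, dotProduct_smul, smul_eq_mul, sub_nonneg] at this

variable (G : SimpleGraph V) [DecidableRel G.Adj]

theorem isHermitian_signlessLaplacian : (signlessLaplacian G).IsHermitian :=
  (G.isHermitian_degMatrix ℝ).add (G.isHermitian_adjMatrix ℝ)

theorem qIndex_eq_sSup_spectrum : qIndex G = sSup (spectrum ℝ (signlessLaplacian G)) := by
  rw [qIndex]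
  congr 1
  ext μ
  rw [← Matrix.spectrum_toLin', ← Module.End.hasEigenvalue_iff_mem_spectrum,
    Module.End.hasEigenvalue_iff, Submodule.ne_bot_iff]
  simp only [Module.End.mem_eigenspace_iff, Matrix.toLin'_apply, Set.mem_ofPred_eq, and_comm]

theorem dotProduct_signlessLaplacian_mulVec_le (x : V → ℝ) :
    x ⬝ᵥ signlessLaplacian G *ᵥ x ≤ qIndex G * (x ⬝ᵥ x) := by
  rw [qIndex_eq_sSup_spectrum]
  exact dotProduct_mulVec_le_sSup_spectrum_mul (isHermitian_signlessLaplacian G) x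

variable {G} in
theorem qIndex_eq_of_iso {H : SimpleGraph W} [DecidableRel H.Adj] (f : G ≃g H) :
    qIndex G = qIndex H := by
  have reindex_eq : Matrix.reindexAlgEquiv ℝ ℝ f.toEquiv (signlessLaplacian G) =
      signlessLaplacian H := by
    rw [signlessLaplacian, signlessLaplacian, map_add, Matrix.coe_reindexAlgEquiv,
      ← f.reindex_adjMatrix ℝ]
    congr 1
    rw [Matrix.reindex_apply, Matrix.submatrix_diagonal_equiv]
    congr 1
    ext w
    simp only [Function.comp_apply]
    exact congrArg _ (f.symm.degree_eq w)
  rw [qIndex_eq_sSup_spectrum, qIndex_eq_sSup_spectrum, ← reindex_eq, AlgEquiv.spectrum_eq]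

theorem two_mul_dotProduct_signlessLaplacian_mulVec (x : V → ℝ) :
    2 * (x ⬝ᵥ signlessLaplacian G *ᵥ x) =
      ∑ i, ∑ j, if G.Adj i j then (x i + x j) ^ 2 else 0 := by
  have deg_eq : x ⬝ᵥ G.degMatrix ℝ *ᵥ x = ∑ i, ∑ j, if G.Adj i j then x i ^ 2 else 0 := by
    simp only [G.dotProduct_mulVec_degMatrix, G.degree_eq_sum_if_adj, sum_mul, ite_mul, one_mul,
      zero_mul, sq]
  have deg_eq_swap : x ⬝ᵥ G.degMatrix ℝ *ᵥ x = ∑ i, ∑ j, if G.Adj i j then x j ^ 2 else 0 := by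
    rw [deg_eq, sum_comm]
    simp only [G.adj_comm]
  calc 2 * (x ⬝ᵥ signlessLaplacian G *ᵥ x)
      = x ⬝ᵥ G.degMatrix ℝ *ᵥ x + x ⬝ᵥ G.degMatrix ℝ *ᵥ x
          + 2 * (x ⬝ᵥ G.adjMatrix ℝ *ᵥ x) := by
        rw [signlessLaplacian, ← SimpleGraph.degMatrix, Matrix.add_mulVec, dotProduct_add]
        ring
    _ = ∑ i, ∑ j, if G.Adj i j then (x i + x j) ^ 2 else 0 := by
        nth_rw 1 [deg_eq]
        rw [deg_eq_swap, G.dotProduct_mulVec_adjMatrix]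
        simp only [mul_sum, ← sum_add_distrib]
        refine sum_congr rfl fun i _ ↦ sum_congr rfl fun j _ ↦ ?_
        split_ifs <;> ring

end Rayleigh

section Interedges

variable {V : Type*} (G : SimpleGraph V)

theorem card_filter_sym2Mk_mem_le [DecidableEq V] (P : Finset (V × V)) (E : Finset (Sym2 V)) :
    #{p ∈ P | s(p.1, p.2) ∈ E} ≤ 2 * #E := by
  refine card_le_mul_card_image_of_maps_to (f := fun p ↦ s(p.1, p.2)) (by simp) 2 fun e _ ↦ ?_
  induction e with | _ a b
  refine (card_le_card (t := {(a, b), (b, a)}) fun p hp ↦ ?_).trans card_le_two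
  simpa [Prod.ext_iff] using (mem_filter.1 hp).2

variable {G} in
theorem card_offDiag_le_card_interedges_deleteEdges_add {S : Finset V} (hS : G.IsClique S)
    (E : Finset (Sym2 V)) [DecidableRel (G.deleteEdges E).Adj] :
    #S.offDiag ≤ #((G.deleteEdges E).interedges S S) + 2 * #E := by
  classical
  have offDiag_subset : S.offDiag ⊆
      (G.deleteEdges E).interedges S S ∪ {p ∈ S.offDiag | s(p.1, p.2) ∈ E} := by
    rintro ⟨v, w⟩ hvw
    obtain ⟨hv, hw, hne⟩ := mem_offDiag.1 hvw
    have hadj := hS hv hw hne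
    by_cases hE : s(v, w) ∈ E <;>
      simp [SimpleGraph.mk_mem_interedges_iff, hv, hw, hne, hadj, hE]
  grw [offDiag_subset, card_union_le, card_filter_sym2Mk_mem_le]

variable [DecidableRel G.Adj]

theorem sum_sum_adj_add_sq_of_eqOn {S T : Finset V} {x : V → ℝ} {a b : ℝ}
    (hS : ∀ i ∈ S, x i = a) (hT : ∀ j ∈ T, x j = b) :
    ∑ i ∈ S, ∑ j ∈ T, (if G.Adj i j then (x i + x j) ^ 2 else 0) =
      (a + b) ^ 2 * #(G.interedges S T) := by
  rw [G.interedges_def, ← nsmul_eq_mul', ← sum_const, sum_filter, sum_product]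
  refine sum_congr rfl fun i hi ↦ sum_congr rfl fun j hj ↦ ?_
  rw [hS i hi, hT j hj]

variable [Fintype V] [DecidableEq V]

theorem piecewise_const_dotProduct_self (S : Finset V) (a b : ℝ) :
    (S.piecewise (fun _ ↦ a) fun _ ↦ b) ⬝ᵥ (S.piecewise (fun _ ↦ a) fun _ ↦ b) =
      #S * a ^ 2 + #Sᶜ * b ^ 2 := by
  rw [dotProduct, ← sum_add_sum_compl S]
  congr 1
  · rw [← nsmul_eq_mul]
    exact sum_eq_card_nsmul fun v hv ↦ by rw [S.piecewise_eq_of_mem _ _ hv, sq]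
  · rw [← nsmul_eq_mul]
    exact sum_eq_card_nsmul fun v hv ↦ by
      rw [S.piecewise_eq_of_notMem _ _ (mem_compl.1 hv), sq]

theorem piecewise_const_dotProduct_signlessLaplacian_mulVec (S : Finset V) (a b : ℝ) :
    (S.piecewise (fun _ ↦ a) fun _ ↦ b) ⬝ᵥ
        signlessLaplacian G *ᵥ (S.piecewise (fun _ ↦ a) fun _ ↦ b) =
      2 * a ^ 2 * #(G.interedges S S) + (a + b) ^ 2 * #(G.interedges S Sᶜ) +
        2 * b ^ 2 * #(G.interedges Sᶜ Sᶜ) := by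
  set x : V → ℝ := S.piecewise (fun _ ↦ a) fun _ ↦ b
  have x_eq_left : ∀ v ∈ S, x v = a := fun v hv ↦ S.piecewise_eq_of_mem _ _ hv
  have x_eq_right : ∀ v ∈ Sᶜ, x v = b := fun v hv ↦
    S.piecewise_eq_of_notMem _ _ (mem_compl.1 hv)
  have card_swap : #(G.interedges Sᶜ S) = #(G.interedges S Sᶜ) :=
    have := G.symm
    Rel.card_interedges_comm ..
  refine mul_left_cancel₀ (two_ne_zero' ℝ) ?_
  rw [two_mul_dotProduct_signlessLaplacian_mulVec, ← sum_add_sum_compl S]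
  simp only [← sum_add_sum_compl S (fun j ↦ if G.Adj _ j then _ else _), sum_add_distrib]
  rw [sum_sum_adj_add_sq_of_eqOn G x_eq_left x_eq_left,
    sum_sum_adj_add_sq_of_eqOn G x_eq_left x_eq_right,
    sum_sum_adj_add_sq_of_eqOn G x_eq_right x_eq_left,
    sum_sum_adj_add_sq_of_eqOn G x_eq_right x_eq_right, card_swap]
  ring

theorem weighted_card_interedges_le_qIndex_mul (S : Finset V) (a b : ℝ) :
    2 * a ^ 2 * #(G.interedges S S) + (a + b) ^ 2 * #(G.interedges S Sᶜ) +
        2 * b ^ 2 * #(G.interedges Sᶜ Sᶜ) ≤ qIndex G * (#S * a ^ 2 + #Sᶜ * b ^ 2) := by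
  rw [← piecewise_const_dotProduct_self, ← piecewise_const_dotProduct_signlessLaplacian_mulVec]
  exact dotProduct_signlessLaplacian_mulVec_le G _

/-- For `#S = u + 1` and `#Sᶜ = s`, the left side is `(2 * #S - 3) * xᵀx` and the right side bounds
`xᵀQx` from below, where `x` is `u` on `S` and `1` off `S`. -/
theorem test_vector_rayleigh_lt {u s d e : ℕ} (hd : 1 ≤ d) (hs : 1 ≤ s)
    (he : e ≤ d * s / 4 + 1) :
    (2 * u - 1) * ((u + 1) * u ^ 2 + s) <
      2 * u ^ 2 * ((u + 1) * u - 2 * e) + (u + 1) ^ 2 * (d * s : ℤ) := by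
  have hsp : s ≤ d * s := Nat.le_mul_of_pos_left s hd
  suffices 0 < (u ^ 2 * (u - 3 + (d * s + 4 - 4 * e)) + (2 * u - 1) * (d * s - s) +
      2 * (d * s) : ℤ) by linarith
  rw [← Nat.cast_mul d s]
  generalize d * s = p at *
  -- For `u < 3` the first summand can be negative, and the rounding in `he` saves the bound.
  obtain hu | hu := lt_or_ge u 3
  · interval_cases u <;> lia
  · have : (0 : ℤ) ≤ u ^ 2 * (u - 3 + (p + 4 - 4 * e)) := mul_nonneg (by positivity) (by lia)
    have : (0 : ℤ) ≤ (2 * u - 1) * (p - s) := mul_nonneg (by lia) (by lia)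
    lia

variable {G} in
theorem two_mul_card_sub_three_lt_qIndex {S : Finset V} {d e : ℕ} (hd : 1 ≤ d) (hS : S.Nonempty)
    (hSc : Sᶜ.Nonempty) (he : e ≤ d * #Sᶜ / 4 + 1)
    (within : #S.offDiag ≤ #(G.interedges S S) + 2 * e)
    (across : d * #Sᶜ ≤ #(G.interedges S Sᶜ)) : 2 * (#S : ℝ) - 3 < qIndex G := by
  obtain ⟨u, hu⟩ : ∃ u, #S = u + 1 := Nat.exists_eq_add_one.2 hS.card_pos
  have bound := weighted_card_interedges_le_qIndex_mul G S u 1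
  have le_card_within : ((u + 1) * u : ℝ) - 2 * e ≤ #(G.interedges S S) := by
    rw [offDiag_card, hu, ← Nat.mul_sub_one] at within
    exact sub_le_iff_le_add.2 (mod_cast within)
  have le_card_across : (d * #Sᶜ : ℝ) ≤ #(G.interedges S Sᶜ) := mod_cast across
  have weight_pos : (0 : ℝ) < #S * (u : ℝ) ^ 2 + #Sᶜ * 1 ^ 2 := by
    have : (0 : ℝ) < #Sᶜ := mod_cast hSc.card_pos
    positivity
  refine lt_of_mul_lt_mul_right ?_ weight_pos.le
  calc (2 * (#S : ℝ) - 3) * (#S * (u : ℝ) ^ 2 + #Sᶜ * 1 ^ 2)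
      = (2 * u - 1) * ((u + 1) * u ^ 2 + #Sᶜ) := by rw [hu]; push_cast; ring
    _ < 2 * (u : ℝ) ^ 2 * ((u + 1) * u - 2 * e) + (u + 1) ^ 2 * (d * #Sᶜ) := by
        exact_mod_cast test_vector_rayleigh_lt (u := u) hd hSc.card_pos he
    _ ≤ 2 * (u : ℝ) ^ 2 * #(G.interedges S S) + (u + 1) ^ 2 * #(G.interedges S Sᶜ) +
          2 * 1 ^ 2 * #(G.interedges Sᶜ Sᶜ) := by
        grw [le_card_within, le_card_across]
        exact le_add_of_nonneg_right (by positivity)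
    _ ≤ qIndex G * (#S * (u : ℝ) ^ 2 + #Sᶜ * 1 ^ 2) := bound

end Interedges

namespace Bgraph

/-- The clique `Y ∪ Z` of `B(n,k,δ)`, which contains the endpoints of all the edges in `E₁`. -/
def cliquePart (n k δ : ℕ) : Finset (Fin n) := {i | (i : ℕ) < n - (δ + k)}

variable {n k δ : ℕ}

theorem isClique_cliquePart : (Bgraph n k δ).IsClique (cliquePart n k δ) := by
  intro i hi j hj hij
  simp only [cliquePart, coe_filter, mem_univ, true_and, Set.mem_ofPred_eq] at hi hj
  exact ⟨hij, .inr (.inr ⟨hi, hj⟩)⟩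

theorem card_cliquePart : #(cliquePart n k δ) = n - (δ + k) := by
  rw [cliquePart, Fin.card_filter_val_lt, min_eq_right (Nat.sub_le ..)]

theorem card_compl_cliquePart (h : δ + k ≤ n) : #(cliquePart n k δ)ᶜ = δ + k := by
  rw [card_compl, card_cliquePart, Fintype.card_fin, Nat.sub_sub_self h]

theorem mul_le_card_interedges_deleteEdges (hn : 2 * δ + k ≤ n) {E : Finset (Sym2 (Fin n))}
    (hE : ∀ e ∈ E, IsE1Edge n k δ e) :
    δ * #(cliquePart n k δ)ᶜ ≤
      #(((Bgraph n k δ).deleteEdges E).interedges (cliquePart n k δ) (cliquePart n k δ)ᶜ) := by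
  have card_dominating : #{i : Fin n | (i : ℕ) < δ} = δ := by
    rw [Fin.card_filter_val_lt, min_eq_right (by lia)]
  have product_subset : ({i : Fin n | (i : ℕ) < δ} : Finset (Fin n)) ×ˢ (cliquePart n k δ)ᶜ ⊆
      ((Bgraph n k δ).deleteEdges E).interedges (cliquePart n k δ) (cliquePart n k δ)ᶜ := by
    rintro ⟨i, j⟩ hij
    simp only [cliquePart, mem_product, mem_filter_univ, mem_compl] at hij
    have hi : (i : ℕ) < n - (δ + k) := by lia
    have hne : i ≠ j := by lia
    have hE' : s(i, j) ∉ E := fun h ↦ hij.2 ((hE _ h).2 j (Sym2.mem_mk_right i j))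
    have hadj : ((Bgraph n k δ).deleteEdges E).Adj i j :=
      (SimpleGraph.deleteEdges_adj ..).2 ⟨⟨hne, .inl hij.1⟩, hE'⟩
    exact (SimpleGraph.mk_mem_interedges_iff ..).2
      ⟨(mem_filter_univ _).2 hi, mem_compl.2 (hij.2 ∘ (mem_filter_univ _).1), hadj⟩
  grw [← product_subset, card_product, card_dominating]

end Bgraph

theorem qIndex_gt_of_inB2_general (k δ n : ℕ) (hδ : 1 ≤ δ) (hn : 2 * δ + k ≤ n)
    (G : SimpleGraph (Fin n)) [DecidableRel G.Adj] (hG : InB2 n k δ G) :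
    2 * ((n : ℝ) - k - δ - 1) - 1 < qIndex G := by
  obtain ⟨E, hE, hcard, ⟨f⟩⟩ := hG
  have card_S : (#(Bgraph.cliquePart n k δ) : ℝ) = n - k - δ := by
    rw [Bgraph.card_cliquePart, Nat.cast_sub (by lia), Nat.cast_add]
    ring
  have card_Sc : #(Bgraph.cliquePart n k δ)ᶜ = δ + k := Bgraph.card_compl_cliquePart (by lia)
  have bound : 2 * (#(Bgraph.cliquePart n k δ) : ℝ) - 3 < qIndex ((Bgraph n k δ).deleteEdges E) :=
    two_mul_card_sub_three_lt_qIndex hδ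
      (card_pos.1 (by rw [Bgraph.card_cliquePart]; lia)) (card_pos.1 (by lia))
      (by rw [card_Sc]; exact hcard.le)
      (card_offDiag_le_card_interedges_deleteEdges_add Bgraph.isClique_cliquePart E)
      (Bgraph.mul_le_card_interedges_deleteEdges hn hE)
  rw [qIndex_eq_of_iso f]
  linarith

/-- **Lemma 3.3**: every graph in the family `𝓑₂(n,k,δ)` has Q-index greater than
`2(n-k-δ-1) - 1`. -/
theorem qIndex_gt_of_inB2 (k δ n : ℕ) (hk : 1 ≤ k) (hδ : 2 ≤ δ)
    (hn : 2 * δ + k + 1 ≤ n)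
    (G : SimpleGraph (Fin n)) [DecidableRel G.Adj] (hG : InB2 n k δ G) :
    2 * ((n : ℝ) - k - δ - 1) - 1 < qIndex G :=
  qIndex_gt_of_inB2_general k δ n (by lia) (by lia) G hG
end
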